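/- Let p be a prime and let G be a finite p-group with |G| = p^n ≥ p^2. Then cod(G) = {p^i | 0 ≤ i ≤ n-1} if and only if one of the following holds: (1) G is isomorphic to Z_{p^{n-1}} × Z_p; (2) n ≥ 4, G has nilpotence class exactly 2, and G is isomorphic to the semidirect product Z_{p^{n-1}} ⋊ Z_p where the generator of Z_p acts on a generator x of Z_{p^{n-1}} by x ↦ x^{1+p^{n-2}}; (3) G has maximal class (nilpotence class n-1) and |cd(G)| = 2. -/

import Mathlib

open CategoryTheory

/-- The degree of a complex representation: the dimension of the underlying vector space. -/
noncomputable def repDegree {G : Type} [Group G] (V : FDRep ℂ G) : ℕ :=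
  Module.finrank ℂ V

/-- The kernel of a representation of `G`, as a subgroup of `G`. -/
noncomputable def repKer {G : Type} [Group G] (V : FDRep ℂ G) : Subgroup G :=
  MonoidHom.ker (Representation.asGroupHom V.ρ)

/-- The codegree of a character: `|G : ker χ| / χ(1)`. -/
noncomputable def codegree {G : Type} [Group G] (V : FDRep ℂ G) : ℕ :=
  (repKer V).index / repDegree V

/-- `cod(G)`: the set of codegrees of the irreducible complex characters of `G`. -/
def codSet (G : Type) [Group G] : Set ℕ :=
  {m | ∃ V : FDRep ℂ G, Simple V ∧ codegree V = m}

/-- `cd(G)`: the set of degrees of the irreducible complex characters of `G`. -/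
def cdSet (G : Type) [Group G] : Set ℕ :=
  {m | ∃ V : FDRep ℂ G, Simple V ∧ repDegree V = m}

/-- The nilpotency class of `G`: the least `n` with `upperCentralSeries G n = ⊤`. -/
noncomputable def nilClass (G : Type) [Group G] : ℕ :=
  sInf {n | upperCentralSeries G n = ⊤}

open scoped Classical in
/-- The character of `G` induced from the linear character `lam` of the subgroup `H`. -/
noncomputable def indLinearChar {G : Type} [Group G] [Fintype G] (H : Subgroup G)
    (lam : H →* ℂˣ) : G → ℂ :=
  fun g => (∑ x : G, if h : x * g * x⁻¹ ∈ H then ((lam ⟨x * g * x⁻¹, h⟩ : ℂˣ) : ℂ) else 0) /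
    (Nat.card H : ℂ)

/-- A finite group is normally monomial if every irreducible complex character is induced
from a linear character of a normal subgroup. -/
def NormallyMonomial (G : Type) [Group G] [Fintype G] : Prop :=
  ∀ V : FDRep ℂ G, Simple V → ∃ (H : Subgroup G) (lam : H →* ℂˣ),
    H.Normal ∧ FDRep.character V = indLinearChar H lam

/-!
Suppose first that the irreducible characters of `G` have degrees `1` and `p` only. Passing to
`G ⧸ ker χ` and back by inflation, `p ^ i` is a codegree of `G` if and only if `G` has a quotient
that is cyclic of order `p ^ i`, or nonabelian of order `p ^ (i + 1)` with cyclic center. This turns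
the condition on `cod(G)` into one about quotients, which settles the three given groups: in a group
of maximal class the quotients by the upper central series have centers of order `p`.

Conversely, a character `χ` of codegree `p ^ (n - 1)` is either linear with kernel of order `p`, and
then `G`, not being cyclic, is `ℤ_{p^{n-1}} × ℤ_p`, or it is faithful of degree `p`. In the latter
case an element of the second center outside the center acts with `p` distinct eigenvalues, so its
centralizer `A` is abelian of index `p`; by Clifford theory all degrees are `1` or `p`. The
commutator map of `A` with an element outside `A` has kernel `Z(G)` and image `G'`, whence
`|Z(G)| p = |G : G'|`. The codegree `p ^ (n - 1)` also makes `Z(G)` cyclic, so that `G` has a unique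
minimal normal subgroup `N`, and every proper quotient of `G` is a quotient of `G ⧸ N`.

* If `G ⧸ N` is abelian, then `G' = N`. Unless `|G| = p ^ 3`, where `G` has maximal class, the
  codegree `p ^ (n - 2)` provides a cyclic quotient of `G ⧸ N` of order `p ^ (n - 2)`, hence a
  cyclic subgroup of index `p` in `G`, which gives the semidirect product.
* Otherwise `G ⧸ N` inherits the codegrees, and induction applies. If it has a center of order `p`
  and maximal class, then so does `G` by the formula for `|Z(G)|`. It cannot have a derived subgroup
  of order `p` and a cyclic subgroup of index `p`, as this would force `G' ≤ N`.
-/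

/-! ### Groups with an abelian subgroup of prime index -/

theorem normal_of_le_center {G : Type*} [Group G] {N : Subgroup G} (h : N ≤ Subgroup.center G) :
    N.Normal :=
  ⟨fun a ha g => by rwa [Subgroup.mem_center_iff.1 (h ha) g, mul_inv_cancel_right]⟩

section PrimeIndex

variable {G : Type*} [Group G] {A H : Subgroup G}

theorem eq_or_eq_top_of_le_of_index_prime (hA : A.index.Prime) (h : A ≤ H) : H = A ∨ H = ⊤ := by
  have hmul := Subgroup.relIndex_mul_index h
  rcases (Nat.dvd_prime hA).1 (Dvd.intro_left _ hmul) with h1 | h1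
  · exact Or.inr (Subgroup.index_eq_one.1 h1)
  · refine Or.inl (le_antisymm (Subgroup.relIndex_eq_one.1 ?_) h)
    exact Nat.eq_of_mul_eq_mul_right hA.pos (by rw [one_mul, ← h1, hmul, h1])

theorem eq_top_of_le_of_index_prime (hA : A.index.Prime) (h : A ≤ H) {b : G} (hb : b ∈ H)
    (hbA : b ∉ A) : H = ⊤ :=
  (eq_or_eq_top_of_le_of_index_prime hA h).resolve_left fun hH => hbA (hH ▸ hb)

theorem exists_notMem_of_index_prime (hA : A.index.Prime) : ∃ b, b ∉ A := by
  by_contra! h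
  exact hA.ne_one (Subgroup.index_eq_one.2 (eq_top_iff.2 fun b _ => h b))

theorem isMulCommutative_of_index_prime_of_le_center (hA : A.index.Prime)
    (h : A ≤ Subgroup.center G) : IsMulCommutative G := by
  have : A.Normal := normal_of_le_center h
  have : Fact A.index.Prime := ⟨hA⟩
  have : IsCyclic (G ⧸ A) := isCyclic_of_prime_card (p := A.index) rfl
  exact (QuotientGroup.mk' A).isMulCommutative_of_isCyclic_of_ker_le_center
    ((QuotientGroup.ker_mk' A).trans_le h)

theorem center_le_of_index_prime [IsMulCommutative A] (hA : A.index.Prime)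
    (hG : ¬IsMulCommutative G) : Subgroup.center G ≤ A := by
  intro z hz
  by_contra hzA
  have htop : Subgroup.centralizer (A : Set G) = ⊤ :=
    eq_top_of_le_of_index_prime hA A.le_centralizer (Subgroup.center_le_centralizer _ hz) hzA
  exact hG (isMulCommutative_of_index_prime_of_le_center hA
    (Subgroup.centralizer_eq_top_iff_subset.1 htop))

section CommutatorEndo

open scoped commutatorElement

variable [A.Normal] [IsMulCommutative A] {b : G}

open scoped IsMulCommutative in
/-- The endomorphism `a ↦ b a b⁻¹ a⁻¹` of an abelian normal subgroup `A`. If `A` has prime index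
and `b ∉ A`, then its kernel is the center and its range the derived subgroup of the group. -/
def commutatorEndo (A : Subgroup G) [A.Normal] [IsMulCommutative A] (b : G) : A →* A :=
  (MulAut.conjNormal b).toMonoidHom / MonoidHom.id A

theorem coe_commutatorEndo_apply (a : A) : (commutatorEndo A b a : G) = ⁅b, (a : G)⁆ := by
  change ((MulAut.conjNormal b a / a : A) : G) = _
  rw [Subgroup.coe_div, MulAut.conjNormal_apply, commutatorElement_def, div_eq_mul_inv]

theorem map_ker_commutatorEndo (hA : A.index.Prime) (hb : b ∉ A) (hG : ¬IsMulCommutative G) :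
    (commutatorEndo A b).ker.map A.subtype = Subgroup.center G := by
  have hmem (a : A) : a ∈ (commutatorEndo A b).ker ↔ b * a = a * b := by
    rw [MonoidHom.mem_ker, ← OneMemClass.coe_eq_one, coe_commutatorEndo_apply,
      commutatorElement_eq_one_iff_mul_comm]
  refine le_antisymm (Subgroup.map_le_iff_le_comap.2 fun a ha => ?_) fun z hz => ?_
  · have hba : b ∈ Subgroup.centralizer {(a : G)} :=
      Subgroup.mem_centralizer_singleton_iff.2 ((hmem a).1 ha)
    have htop := eq_top_of_le_of_index_prime hA
      (A.le_centralizer.trans (Subgroup.centralizer_le (Set.singleton_subset_iff.2 a.2))) hba hb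
    exact Subgroup.centralizer_eq_top_iff_subset.1 htop rfl
  · exact ⟨⟨z, center_le_of_index_prime hA hG hz⟩, (hmem _).2 (Subgroup.mem_center_iff.1 hz b),
      rfl⟩

variable [Finite G]

theorem normal_map_range_commutatorEndo (hA : A.index.Prime) (hb : b ∉ A) :
    ((commutatorEndo A b).range.map A.subtype).Normal := by
  refine Subgroup.normalizer_eq_top_iff.1 (eq_top_of_le_of_index_prime hA ?_ (b := b) ?_ hb)
  · exact (A.le_centralizer.trans (Subgroup.centralizer_le (Subgroup.map_subtype_le _))).trans
      (Subgroup.centralizer_le_normalizer _)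
  · refine Subgroup.mem_normalizer_fintype ?_
    rintro _ ⟨_, ⟨a, rfl⟩, rfl⟩
    refine ⟨_, ⟨MulAut.conjNormal b a, rfl⟩, ?_⟩
    simp [coe_commutatorEndo_apply, commutatorElement_def, mul_assoc]

theorem map_range_commutatorEndo (hA : A.index.Prime) (hb : b ∉ A) :
    (commutatorEndo A b).range.map A.subtype = commutator G := by
  set R := (commutatorEndo A b).range.map A.subtype
  have hRn : R.Normal := normal_map_range_commutatorEndo hA hb
  have hle : A.map (QuotientGroup.mk' R) ≤ Subgroup.center (G ⧸ R) := by
    rintro _ ⟨a, ha, rfl⟩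
    have hmem (g : G) : g ∈ (Subgroup.centralizer {(a : G ⧸ R)}).comap (QuotientGroup.mk' R) ↔
        ⁅g, a⁆ ∈ R := by
      rw [Subgroup.mem_comap, Subgroup.mem_centralizer_singleton_iff,
        ← commutatorElement_eq_one_iff_mul_comm]
      exact QuotientGroup.eq_one_iff _
    have htop := eq_top_of_le_of_index_prime hA (fun c hc => (hmem c).2 ?_) ((hmem b).2 ?_) hb
    · rw [Subgroup.mem_center_iff]
      rintro ⟨g⟩
      exact Subgroup.mem_centralizer_singleton_iff.1 (htop.ge (Subgroup.mem_top g))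
    · rw [commutatorElement_eq_one_iff_mul_comm.2 (setLike_mul_comm hc ha)]
      exact R.one_mem
    · exact ⟨_, ⟨⟨a, ha⟩, rfl⟩, coe_commutatorEndo_apply _⟩
  have hidx : (A.map (QuotientGroup.mk' R)).index = A.index :=
    Subgroup.index_map_eq _ (QuotientGroup.mk'_surjective R)
      ((QuotientGroup.ker_mk' R).trans_le (Subgroup.map_subtype_le _))
  refine le_antisymm ?_ (Subgroup.Normal.quotient_commutative_iff_commutator_le.1
    (isMulCommutative_of_index_prime_of_le_center (hidx ▸ hA) hle))
  rintro _ ⟨_, ⟨a, rfl⟩, rfl⟩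
  rw [Subgroup.coe_subtype, coe_commutatorEndo_apply]
  exact Subgroup.commutator_mem_commutator (Subgroup.mem_top b) (Subgroup.mem_top _)

end CommutatorEndo

theorem card_center_mul_index [Finite G] [A.Normal] [IsMulCommutative A] (hA : A.index.Prime)
    (hG : ¬IsMulCommutative G) :
    Nat.card (Subgroup.center G) * A.index = (commutator G).index := by
  obtain ⟨b, hb⟩ := exists_notMem_of_index_prime hA
  rw [← map_ker_commutatorEndo hA hb hG, ← map_range_commutatorEndo hA hb,
    Subgroup.index_map_subtype, Subgroup.index_range,
    Subgroup.card_map_of_injective A.subtype_injective]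

end PrimeIndex

/-! ### Finite p-groups -/

section Commutator

open scoped commutatorElement

variable {G : Type*} [Group G] {a b : G} {N : Subgroup G}

theorem commutatorElement_pow_right (h : Commute ⁅a, b⁆ b) (k : ℕ) : ⁅a, b ^ k⁆ = ⁅a, b⁆ ^ k := by
  have hconj : ⁅a, b⁆ * b = a * b * a⁻¹ := by group
  rw [commutatorElement_def a (b ^ k), ← conj_pow, ← hconj, h.mul_pow, mul_inv_cancel_right]

theorem commutatorElement_pow_left (h : Commute ⁅a, b⁆ a) (k : ℕ) : ⁅a ^ k, b⁆ = ⁅a, b⁆ ^ k := by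
  have h' : Commute ⁅b, a⁆ a := commutatorElement_inv a b ▸ h.inv_left
  rw [← inv_inj, commutatorElement_inv, commutatorElement_pow_right h', ← inv_pow,
    commutatorElement_inv]

theorem pow_card_mem_center (hN : N ≤ Subgroup.center G) (h : ∀ g : G, ⁅g, a⁆ ∈ N) :
    a ^ Nat.card N ∈ Subgroup.center G := by
  refine Subgroup.mem_center_iff.2 fun g => commutatorElement_eq_one_iff_mul_comm.1 ?_
  rw [commutatorElement_pow_right (Subgroup.mem_center_iff.1 (hN (h g)) a).symm]
  exact congrArg Subtype.val (pow_card_eq_one' (x := (⟨_, h g⟩ : N)))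

theorem mk_mem_center_iff [N.Normal] :
    (a : G ⧸ N) ∈ Subgroup.center (G ⧸ N) ↔ ∀ g : G, ⁅g, a⁆ ∈ N := by
  rw [Subgroup.mem_center_iff, (QuotientGroup.mk'_surjective N).forall]
  refine forall_congr' fun g => ?_
  rw [← commutatorElement_eq_one_iff_mul_comm, ← QuotientGroup.eq_one_iff]
  rfl

end Commutator

theorem mem_zpowers_pow_of_pow_eq_one {G : Type*} [Group G] {x y : G} {k : ℕ} (hk : k ≠ 0)
    (hx : x ∈ Subgroup.zpowers y) (hxk : x ^ k = 1) (hy : k * k ∣ orderOf y) :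
    x ∈ Subgroup.zpowers (y ^ k) := by
  obtain ⟨s, rfl⟩ := hx
  simp only at hxk ⊢
  rw [← zpow_natCast, ← zpow_mul, ← orderOf_dvd_iff_zpow_eq_one] at hxk
  have hdvd : (k * k : ℤ) ∣ s * k := (by exact_mod_cast hy : (k * k : ℤ) ∣ orderOf y).trans hxk
  obtain ⟨t, rfl⟩ := Int.dvd_of_mul_dvd_mul_right (by exact_mod_cast hk) hdvd
  exact ⟨t, by simp [zpow_mul]⟩

theorem subgroup_eq_of_card_eq {C : Type*} [Group C] [IsCyclic C] [Finite C] {H K : Subgroup C}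
    (h : Nat.card H = Nat.card K) : H = K := by
  let := IsCyclic.commGroup (α := C)
  have hker (L : Subgroup C) : L = (powMonoidHom (Nat.card L) : C →* C).ker := by
    refine Subgroup.eq_of_le_of_card_ge (fun x hx => ?_) ?_
    · exact congrArg Subtype.val (pow_card_eq_one' (x := (⟨x, hx⟩ : L)))
    · rw [IsCyclic.card_powMonoidHom_ker, Nat.gcd_eq_right L.card_subgroup_dvd_card]
  rw [hker H, hker K, h]

/-- A normal subgroup of order `p` contained in every nontrivial normal subgroup, as exists in every
nontrivial `p`-group with cyclic center; it is then central. -/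
structure IsMonolith (p : ℕ) {G : Type*} [Group G] (N : Subgroup G) : Prop where
  le_center : N ≤ Subgroup.center G
  card_eq : Nat.card N = p
  le_of_ne_bot (K : Subgroup G) [K.Normal] : K ≠ ⊥ → N ≤ K

section PGroup

variable {p n : ℕ} [Fact p.Prime] {G : Type*} [Group G]

theorem index_eq_pow_of_card {i j : ℕ} {H : Subgroup G} (hG : Nat.card G = p ^ (i + j))
    (hH : Nat.card H = p ^ i) : H.index = p ^ j := by
  have hmul := H.card_mul_index
  rw [hH, hG, pow_add] at hmul
  exact Nat.eq_of_mul_eq_mul_left (pow_pos (Fact.out : p.Prime).pos i) hmul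

theorem index_eq_prime_of_card {A : Subgroup G} (hG : Nat.card G = p ^ (n + 1))
    (hA : Nat.card A = p ^ n) : A.index = p :=
  (index_eq_pow_of_card hG hA).trans (pow_one p)

variable [Finite G]

theorem exists_subgroup_card_eq_prime (hG : IsPGroup p G) [Nontrivial G] :
    ∃ H : Subgroup G, Nat.card H = p := by
  obtain ⟨z, hz⟩ := exists_prime_orderOf_dvd_card' p
    (hG.card_eq_or_dvd.resolve_left Finite.one_lt_card.ne')
  exact ⟨Subgroup.zpowers z, by rw [Nat.card_zpowers, hz]⟩

theorem inf_center_ne_bot (hG : IsPGroup p G) {K : Subgroup G} [K.Normal] (hK : K ≠ ⊥) :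
    K ⊓ Subgroup.center G ≠ ⊥ := by
  have hdvd : p ∣ Nat.card K :=
    (hG.to_subgroup K).card_eq_or_dvd.resolve_left (mt Subgroup.card_eq_one.1 hK)
  have hConj : IsPGroup p (ConjAct G) := hG
  obtain ⟨b, hb, hb1⟩ := hConj.exists_fixed_point_of_prime_dvd_card_of_fixed_point K hdvd
    (a := (1 : K)) smul_one
  have hbZ : (b : G) ∈ Subgroup.center G := Subgroup.mem_center_iff.2 fun g => by
    have h := congrArg Subtype.val (hb (ConjAct.toConjAct g))
    rw [ConjAct.Subgroup.val_conj_smul, ConjAct.toConjAct_smul] at h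
    exact mul_inv_eq_iff_eq_mul.1 h
  exact fun h => hb1 (Subtype.ext (Subgroup.mem_bot.1 (h.le ⟨b.2, hbZ⟩)).symm)

theorem le_center_of_card_eq_prime (hG : IsPGroup p G) {K : Subgroup G} [K.Normal]
    (hK : Nat.card K = p) : K ≤ Subgroup.center G := by
  have hp : p.Prime := Fact.out
  have hK1 : K ≠ ⊥ := by
    rintro rfl
    exact hp.ne_one (hK ▸ Subgroup.card_bot)
  have hdvd := Subgroup.card_dvd_of_le (inf_le_left : K ⊓ Subgroup.center G ≤ K)
  rw [hK, Nat.dvd_prime hp, Subgroup.card_eq_one, or_iff_right (inf_center_ne_bot hG hK1)] at hdvd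
  exact inf_eq_left.1 (Subgroup.eq_of_le_of_card_ge inf_le_left (hK.trans hdvd.symm).le)

theorem normal_of_index_eq_prime (hG : IsPGroup p G) {A : Subgroup G} (hA : A.index = p) :
    A.Normal := by
  obtain ⟨n, hn⟩ := hG.exists_card_eq
  have hn0 : n ≠ 0 := by
    rintro rfl
    have h := A.index_dvd_card
    rw [hn, hA, pow_zero, Nat.dvd_one] at h
    exact (Fact.out : p.Prime).ne_one h
  exact Subgroup.normal_of_index_eq_minFac_card
    (by rw [hA, hn, (Fact.out : p.Prime).pow_minFac hn0])

theorem exists_isMonolith (hG : IsPGroup p G) [Nontrivial G]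
    (hZ : IsCyclic (Subgroup.center G)) : ∃ N : Subgroup G, IsMonolith p N := by
  have hZp := hG.to_subgroup (Subgroup.center G)
  have := hG.center_nontrivial
  obtain ⟨N, hN⟩ := exists_subgroup_card_eq_prime hZp
  refine ⟨N.map (Subgroup.center G).subtype, Subgroup.map_subtype_le N,
    (Subgroup.card_map_of_injective (Subgroup.subtype_injective _)).trans hN, fun K hK hK1 => ?_⟩
  have hKp := hG.to_subgroup (K ⊓ Subgroup.center G)
  have := (Subgroup.nontrivial_iff_ne_bot _).2 (inf_center_ne_bot hG hK1)
  obtain ⟨L, hL⟩ := exists_subgroup_card_eq_prime hKp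
  have hLN : N = L.map (Subgroup.inclusion inf_le_right) := by
    apply subgroup_eq_of_card_eq
    rw [hN, Subgroup.card_map_of_injective (Subgroup.inclusion_injective _), hL]
  rw [hLN, Subgroup.map_map, Subgroup.map_le_iff_le_comap]
  exact fun x _ => x.2.1

theorem exists_card_center_eq_pow (hG : Nat.card G = p ^ n) (hc : ¬IsMulCommutative G) :
    ∃ k, 0 < k ∧ k + 2 ≤ n ∧ Nat.card (Subgroup.center G) = p ^ k := by
  have hp : p.Prime := Fact.out
  have hn : n ≠ 0 := by
    rintro rfl
    have := (Nat.card_eq_one_iff_unique.1 hG).1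
    exact hc ⟨⟨fun _ _ => Subsingleton.elim _ _⟩⟩
  obtain ⟨k, hk, hcard⟩ := IsPGroup.card_center_eq_prime_pow hG (Nat.pos_of_ne_zero hn)
  have hkn : k ≤ n := (Nat.pow_dvd_pow_iff_le_right hp.one_lt).1
    (hcard ▸ hG ▸ (Subgroup.center G).card_subgroup_dvd_card)
  refine ⟨k, hk, ?_, hcard⟩
  by_contra! hlt
  obtain rfl | rfl : n = k ∨ n = k + 1 := by omega
  · exact hc (Subgroup.center_eq_top_iff.1 (Subgroup.eq_top_of_card_eq _ (hcard.trans hG.symm)))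
  · exact hc (isMulCommutative_of_index_prime_of_le_center
      (index_eq_prime_of_card hG hcard ▸ hp) le_rfl)

end PGroup

namespace IsMonolith

variable {p n : ℕ} {G : Type*} [Group G] {N : Subgroup G} {c : G}

theorem le_zpowers (hN : IsMonolith p N) (hc : c ∈ Subgroup.center G) (hc1 : c ≠ 1) :
    N ≤ Subgroup.zpowers c :=
  have := normal_of_le_center (Subgroup.zpowers_le.2 hc)
  hN.le_of_ne_bot _ (Subgroup.zpowers_ne_bot.2 hc1)

variable [Fact p.Prime]

theorem card_quotient (hN : IsMonolith p N) (hG : Nat.card G = p ^ (n + 1)) :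
    Nat.card (G ⧸ N) = p ^ n :=
  index_eq_pow_of_card (i := 1) (hG.trans (by rw [add_comm])) (hN.card_eq.trans (pow_one p).symm)

theorem mem_of_pow_eq_one [Finite G] (hN : IsMonolith p N) (hc : c ∈ Subgroup.center G)
    (hcp : c ^ p = 1) : c ∈ N := by
  rcases eq_or_ne c 1 with rfl | hc1
  · exact N.one_mem
  · have hcard : Nat.card (Subgroup.zpowers c) = Nat.card N := by
      rw [Nat.card_zpowers, orderOf_eq_prime hcp hc1, hN.card_eq]
    rw [Subgroup.eq_of_le_of_card_ge (hN.le_zpowers hc hc1) hcard.le]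
    exact Subgroup.mem_zpowers c

end IsMonolith

/-! ### Codegree witnesses -/

universe u

theorem not_isMulCommutative_of_surjective {G H : Type*} [Group G] [Group H] {f : G →* H}
    (hf : Function.Surjective f) (hH : ¬IsMulCommutative H) : ¬IsMulCommutative G := fun _ =>
  hH ⟨⟨hf.forall₂.2 fun a b => by rw [← map_mul, mul_comm' a b, map_mul]⟩⟩

theorem nontrivial_of_not_isMulCommutative {G : Type*} [Group G] (hG : ¬IsMulCommutative G) :
    Nontrivial G :=
  not_subsingleton_iff_nontrivial.1 fun _ => hG ⟨⟨fun _ _ => Subsingleton.elim _ _⟩⟩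

theorem index_zpowers_mk {G : Type*} [Group G] {N : Subgroup G} [N.Normal] {y : G}
    (h : N ≤ Subgroup.zpowers y) :
    (Subgroup.zpowers (y : G ⧸ N)).index = (Subgroup.zpowers y).index := by
  rw [← QuotientGroup.mk'_apply, ← MonoidHom.map_zpowers]
  exact Subgroup.index_map_eq _ (QuotientGroup.mk'_surjective N)
    ((QuotientGroup.ker_mk' N).trans_le h)

theorem nilpotencyClass_eq_one_of_isMulCommutative {G : Type*} [Group G] [Group.IsNilpotent G]
    [Nontrivial G] (h : IsMulCommutative G) : Group.nilpotencyClass G = 1 :=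
  (Group.IsNilpotent.nilpotencyClass_le_one_iff.2 h).antisymm (Nat.one_le_iff_ne_zero.2
    (mt Group.nilpotencyClass_zero_iff_subsingleton.1 (not_subsingleton G)))

section Witness

/-- Every codegree `p ^ i` of a `p`-group with an abelian subgroup of index `p` comes from a
quotient `H` of this shape: `p ^ i` is the codegree of the faithful irreducible characters of `H`,
which have degree `1` in the first case and `p` in the second. -/
def IsCodegreeWitness (p i : ℕ) (H : Type*) [Group H] : Prop :=
  (Nat.card H = p ^ i ∧ IsCyclic H) ∨
    (Nat.card H = p ^ (i + 1) ∧ ¬IsMulCommutative H ∧ IsCyclic (Subgroup.center H))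

/-- `G` maps onto a group having faithful irreducible characters of codegree `p ^ i`. -/
def HasCodegreeWitness (p i : ℕ) (G : Type u) [Group G] : Prop :=
  ∃ (H : Type u) (_ : Group H) (f : G →* H), Function.Surjective f ∧ IsCodegreeWitness p i H

theorem HasCodegreeWitness.of_surjective {p i : ℕ} {G H : Type u} [Group G] [Group H]
    (h : HasCodegreeWitness p i H) {f : G →* H} (hf : Function.Surjective f) :
    HasCodegreeWitness p i G :=
  let ⟨K, hK, g, hg, hw⟩ := h
  ⟨K, hK, g.comp f, hg.comp hf, hw⟩

/-- Nonabelian groups with a cyclic subgroup of index `p` and a derived subgroup of order `p`;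
for a `p`-group of order at least `p ^ 4` these are the semidirect products of the second case of
the theorem. -/
def IsModularType (p : ℕ) (G : Type*) [Group G] : Prop :=
  Nat.card (commutator G) = p ∧ ∃ y : G, (Subgroup.zpowers y).index = p

variable {p n i : ℕ} [Fact p.Prime] {G : Type u} [Group G]

theorem IsCodegreeWitness.card_le {H : Type*} [Group H] (h : IsCodegreeWitness p i H) :
    Nat.card H ≤ p ^ (i + 1) := by
  obtain ⟨h, -⟩ | ⟨h, -⟩ := h
  · exact h.trans_le (Nat.pow_le_pow_right (Fact.out : p.Prime).pos i.le_succ)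
  · exact h.le

theorem HasCodegreeWitness.quotient {N : Subgroup G} [N.Normal] (hG : p ^ (i + 1) < Nat.card G)
    (hN : IsMonolith p N) (h : HasCodegreeWitness p i G) :
    HasCodegreeWitness p i (G ⧸ N) := by
  obtain ⟨H, _, f, hf, hH⟩ := h
  have hker : f.ker ≠ ⊥ := fun hbot => by
    have hcard := Nat.card_congr (Equiv.ofBijective f ⟨(f.ker_eq_bot_iff).1 hbot, hf⟩)
    exact absurd hH.card_le (by rw [← hcard]; exact hG.not_ge)
  exact ⟨H, ‹_›, QuotientGroup.lift N f (hN.le_of_ne_bot _ hker),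
    QuotientGroup.lift_surjective_of_surjective _ _ hf _, hH⟩

theorem IsMonolith.isModularType {N : Subgroup G} [N.Normal] (hN : IsMonolith p N)
    (hcard : Nat.card G = p ^ (n + 4)) (hG : ¬IsMulCommutative G)
    (hQ : IsMulCommutative (G ⧸ N)) (h : HasCodegreeWitness p (n + 2) G) : IsModularType p G := by
  have hp : p.Prime := Fact.out
  have hcomm : commutator G ≤ N := Subgroup.Normal.quotient_commutative_iff_commutator_le.1 hQ
  refine ⟨?_, ?_⟩
  · rw [← hN.card_eq, hcomm.antisymm (hN.le_of_ne_bot _ (mt (commutator_eq_bot_iff G).1 hG))]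
  obtain ⟨H, _, f, hf, ⟨hH, hcyc⟩ | ⟨-, hH, -⟩⟩ :=
    h.quotient (hcard ▸ Nat.pow_lt_pow_right hp.one_lt (Nat.lt_succ_self _)) hN
  swap
  · exact absurd hQ (not_isMulCommutative_of_surjective hf hH)
  obtain ⟨x, hx⟩ := hcyc.exists_ofOrder_eq_natCard
  obtain ⟨⟨y⟩, rfl⟩ := hf x
  have hord : p ^ (n + 2) ∣ orderOf (y : G ⧸ N) := hH ▸ hx ▸ orderOf_map_dvd f _
  have hyZ : y ^ p ∈ Subgroup.center G := hN.card_eq ▸ pow_card_mem_center hN.le_center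
    fun g => hcomm (Subgroup.commutator_mem_commutator (Subgroup.mem_top g) (Subgroup.mem_top y))
  have hy1 : y ^ p ≠ 1 := fun h1 => by
    have hdvd := (hord.trans (orderOf_map_dvd (QuotientGroup.mk' N) y)).trans
      (orderOf_dvd_of_pow_eq_one h1)
    exact (Nat.le_of_dvd hp.pos hdvd).not_gt (lt_self_pow₀ hp.one_lt (by omega))
  refine ⟨y, ?_⟩
  have hNy : N ≤ Subgroup.zpowers y :=
    (hN.le_zpowers hyZ hy1).trans (Subgroup.zpowers_le.2 (Subgroup.npow_mem_zpowers y p))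
  have hdvd : (Subgroup.zpowers y).index ∣ p := by
    have hmul := (Subgroup.zpowers (y : G ⧸ N)).card_mul_index
    rw [Nat.card_zpowers, hN.card_quotient hcard, index_zpowers_mk hNy, pow_succ] at hmul
    exact Nat.dvd_of_mul_dvd_mul_left (pow_pos hp.pos (n + 2))
      (hmul ▸ Nat.mul_dvd_mul_right hord _)
  refine ((Nat.dvd_prime hp).1 hdvd).resolve_left fun h1 => hG ?_
  have : IsCyclic G := isCyclic_iff_exists_zpowers_eq_top.2 ⟨y, Subgroup.index_eq_one.1 h1⟩
  infer_instance

variable [Finite G]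

theorem HasCodegreeWitness.isCyclic_center (hcard : Nat.card G = p ^ (n + 1))
    (hG : ¬IsMulCommutative G) (h : HasCodegreeWitness p n G) : IsCyclic (Subgroup.center G) := by
  obtain ⟨H, _, f, hf, ⟨hH, hcyc⟩ | ⟨hH, -, hcyc⟩⟩ := h
  · have hmul := f.ker.card_mul_index
    rw [Subgroup.index_ker, MonoidHom.range_eq_top.2 hf, Subgroup.card_top, hH, hcard,
      pow_succ'] at hmul
    have hker : Nat.card f.ker = p :=
      Nat.eq_of_mul_eq_mul_right (pow_pos (Fact.out : p.Prime).pos n) hmul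
    exact absurd (f.isMulCommutative_of_isCyclic_of_ker_le_center
      (le_center_of_card_eq_prime (IsPGroup.of_card hcard) hker)) hG
  · have e : G ≃* H := MulEquiv.ofBijective f
      (hf.bijective_of_nat_card_le (by rw [hcard, hH]))
    exact (Subgroup.centerCongr e).isCyclic.2 hcyc

theorem card_center_quotient_eq {A N : Subgroup G} [A.Normal] [IsMulCommutative A] [N.Normal]
    (hA : A.index.Prime) (hNA : N ≤ A) (hN : N ≤ commutator G) (hG : ¬IsMulCommutative (G ⧸ N)) :
    Nat.card (Subgroup.center (G ⧸ N)) = Nat.card (Subgroup.center G) := by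
  have hmap {K : Subgroup G} (hK : N ≤ K) : (K.map (QuotientGroup.mk' N)).index = K.index :=
    Subgroup.index_map_eq _ (QuotientGroup.mk'_surjective N) ((QuotientGroup.ker_mk' N).trans_le hK)
  have : (A.map (QuotientGroup.mk' N)).Normal :=
    Subgroup.Normal.map ‹_› _ (QuotientGroup.mk'_surjective N)
  have hcomm : (commutator G).map (QuotientGroup.mk' N) = commutator (G ⧸ N) := by
    rw [commutator_def, commutator_def, Subgroup.map_commutator,
      Subgroup.map_top_of_surjective _ (QuotientGroup.mk'_surjective N)]
  refine Nat.eq_of_mul_eq_mul_right hA.pos ?_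
  rw [card_center_mul_index hA
    (not_isMulCommutative_of_surjective (QuotientGroup.mk'_surjective N) hG), ← hmap hN, hcomm,
    ← card_center_mul_index (hmap hNA ▸ hA) hG, hmap hNA]

section Modular

open scoped commutatorElement

variable {N : Subgroup G} [N.Normal] {y b : G}

/-- Here `c = ⁅b, y⁆` satisfies `c ^ p ^ 2 = 1`, hence is a power of the central element
`y ^ p ^ 2`; being central, `c` then satisfies `c ^ p = ⁅b ^ p, y⁆ = 1`. -/
theorem commutatorElement_pow_eq_one (hG : IsPGroup p G)
    (hy : (Subgroup.zpowers y).index = p) (hcard : p ^ 4 ∣ orderOf y)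
    (hyZ : y ^ p ^ 2 ∈ Subgroup.center G) :
    ⁅b, y⁆ ∈ Subgroup.center G ∧ ⁅b, y⁆ ^ p = 1 := by
  have : (Subgroup.zpowers y).Normal := normal_of_index_eq_prime hG hy
  have hcy : ⁅b, y⁆ ∈ Subgroup.zpowers y :=
    mul_mem (this.conj_mem y (Subgroup.mem_zpowers y) b) (inv_mem (Subgroup.mem_zpowers y))
  have hpow : ⁅b, y⁆ ^ p ^ 2 = 1 := by
    rw [← commutatorElement_pow_right (setLike_mul_comm hcy (Subgroup.mem_zpowers y)),
      commutatorElement_eq_one_iff_mul_comm]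
    exact Subgroup.mem_center_iff.1 hyZ b
  have hcZ : ⁅b, y⁆ ∈ Subgroup.center G := by
    refine Subgroup.zpowers_le.2 hyZ (mem_zpowers_pow_of_pow_eq_one ?_ hcy hpow ?_)
    · exact pow_ne_zero 2 (Fact.out : p.Prime).ne_zero
    · rwa [← pow_add]
  refine ⟨hcZ, ?_⟩
  rw [← commutatorElement_pow_left (Subgroup.mem_center_iff.1 hcZ b).symm,
    commutatorElement_eq_one_iff_mul_comm]
  exact setLike_mul_comm (hy ▸ Subgroup.pow_index_mem _ b) (Subgroup.mem_zpowers y)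

theorem IsMonolith.le_zpowers_of_index_zpowers_mk (hN : IsMonolith p N)
    (hG : Nat.card G = p ^ (n + 5)) (hcomm : Nat.card (commutator (G ⧸ N)) = p)
    (hy : (Subgroup.zpowers (y : G ⧸ N)).index = p) :
    y ^ p ^ 2 ∈ Subgroup.center G ∧ N ≤ Subgroup.zpowers y := by
  have hp : p.Prime := Fact.out
  have hypZ : ((y ^ p : G) : G ⧸ N) ∈ Subgroup.center (G ⧸ N) := by
    have h := pow_card_mem_center (a := (y : G ⧸ N))
      (le_center_of_card_eq_prime ((IsPGroup.of_card hG).to_quotient N) hcomm)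
      fun g => Subgroup.commutator_mem_commutator (Subgroup.mem_top g) (Subgroup.mem_top _)
    rwa [hcomm] at h
  have hyZ : y ^ p ^ 2 ∈ Subgroup.center G := by
    have h := pow_card_mem_center hN.le_center (mk_mem_center_iff.1 hypZ)
    rwa [hN.card_eq, ← pow_mul, ← sq] at h
  have hy1 : y ^ p ^ 2 ≠ 1 := fun h => by
    have hmul := (Subgroup.zpowers (y : G ⧸ N)).card_mul_index
    rw [Nat.card_zpowers, hy, hN.card_quotient hG, pow_succ] at hmul
    have hdvd : p ^ (n + 3) ∣ p ^ 2 := by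
      rw [← Nat.eq_of_mul_eq_mul_right hp.pos hmul]
      exact orderOf_dvd_of_pow_eq_one (by rw [← QuotientGroup.mk_pow, h, QuotientGroup.mk_one])
    have := (Nat.pow_dvd_pow_iff_le_right hp.one_lt).1 hdvd
    omega
  exact ⟨hyZ, (hN.le_zpowers hyZ hy1).trans
    (Subgroup.zpowers_le.2 (Subgroup.npow_mem_zpowers y _))⟩

theorem IsMonolith.not_isModularType_quotient (hN : IsMonolith p N)
    (hG : Nat.card G = p ^ (n + 5)) :
    ¬IsModularType p (G ⧸ N) := by
  have hp : p.Prime := Fact.out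
  rintro ⟨hcomm, y, hy⟩
  obtain ⟨y, rfl⟩ := QuotientGroup.mk_surjective y
  obtain ⟨hyZ, hNy⟩ := hN.le_zpowers_of_index_zpowers_mk hG hcomm hy
  have hyG : (Subgroup.zpowers y).index = p := (index_zpowers_mk hNy).symm.trans hy
  have hord : p ^ 4 ∣ orderOf y := by
    have hmul := (Subgroup.zpowers y).card_mul_index
    rw [Nat.card_zpowers, hyG, hG, pow_succ] at hmul
    rw [Nat.eq_of_mul_eq_mul_right hp.pos hmul]
    exact pow_dvd_pow p (Nat.le_add_left 4 n)
  have hyN : (y : G ⧸ N) ∈ Subgroup.center (G ⧸ N) := mk_mem_center_iff.2 fun b => by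
    obtain ⟨hbZ, hbp⟩ := commutatorElement_pow_eq_one (IsPGroup.of_card hG) (b := b) hyG hord hyZ
    exact hN.mem_of_pow_eq_one hbZ hbp
  have := isMulCommutative_of_index_prime_of_le_center (hy ▸ hp) (Subgroup.zpowers_le.2 hyN)
  rw [(commutator_eq_bot_iff _).2 this, Subgroup.card_bot] at hcomm
  exact hp.ne_one hcomm.symm

end Modular

/-- Induction on the order through the quotient by the monolith `N`. If `G ⧸ N` is nonabelian, it
has a center of the same order as that of `G`, so maximal class is inherited from `G ⧸ N`. -/
theorem maximalClass_or_isModularType {A : Subgroup G} [A.Normal] [IsMulCommutative A]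
    (hA : A.index = p) (hcard : Nat.card G = p ^ n) (hG : ¬IsMulCommutative G)
    (h : ∀ i < n, HasCodegreeWitness p i G) :
    (Group.nilpotencyClass G + 1 = n ∧ Nat.card (Subgroup.center G) = p) ∨
      (4 ≤ n ∧ IsModularType p G) := by
  have hp : p.Prime := Fact.out
  induction n generalizing G with
  | zero => obtain ⟨k, -, hk, -⟩ := exists_card_center_eq_pow hcard hG; omega
  | succ n ih =>
    have hGp := IsPGroup.of_card hcard
    have := hGp.isNilpotent
    have := nontrivial_of_not_isMulCommutative hG
    obtain ⟨N, hN⟩ := exists_isMonolith hGp ((h n n.lt_succ_self).isCyclic_center hcard hG)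
    have := normal_of_le_center hN.le_center
    obtain ⟨k, hk0, hk, hZ⟩ := exists_card_center_eq_pow hcard hG
    have hclass (hZ : Nat.card (Subgroup.center G) = p) :
        Group.nilpotencyClass G = Group.nilpotencyClass (G ⧸ N) + 1 := by
      obtain rfl := Subgroup.eq_of_le_of_card_ge hN.le_center (hZ.trans hN.card_eq.symm).le
      exact Group.nilpotencyClass_eq_quotient_center_plus_one
    by_cases hQ : IsMulCommutative (G ⧸ N)
    · rcases (by omega : n = 2 ∨ 3 ≤ n) with rfl | hn
      · obtain rfl : k = 1 := by omega
        rw [pow_one] at hZ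
        have : Nontrivial (G ⧸ N) := Finite.one_lt_card_iff_nontrivial.1
          (hN.card_quotient hcard ▸ Nat.one_lt_pow two_ne_zero hp.one_lt)
        exact Or.inl ⟨by rw [hclass hZ, nilpotencyClass_eq_one_of_isMulCommutative hQ], hZ⟩
      · obtain ⟨m, rfl⟩ := Nat.exists_eq_add_of_le' hn
        exact Or.inr ⟨by omega, hN.isModularType hcard hG hQ (h _ (by omega))⟩
    · have hNA : N ≤ A := hN.le_center.trans (center_le_of_index_prime (hA ▸ hp) hG)
      have hNG := hN.le_of_ne_bot _ (mt (commutator_eq_bot_iff G).1 hG)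
      have hZQ := card_center_quotient_eq (hA ▸ hp) hNA hNG hQ
      have := Subgroup.Normal.map ‹A.Normal› _ (QuotientGroup.mk'_surjective N)
      have hAQ : (A.map (QuotientGroup.mk' N)).index = p :=
        (Subgroup.index_map_eq _ (QuotientGroup.mk'_surjective N)
          ((QuotientGroup.ker_mk' N).trans_le hNA)).trans hA
      obtain ⟨hcl, hZp⟩ | ⟨hn, hmod⟩ := ih hAQ (hN.card_quotient hcard) hQ fun i hi =>
        (h i (by omega)).quotient (hcard ▸ Nat.pow_lt_pow_right hp.one_lt (by omega)) hN
      · exact Or.inl ⟨by rw [hclass (hZQ ▸ hZp), hcl], hZQ ▸ hZp⟩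
      · obtain ⟨m, rfl⟩ := Nat.exists_eq_add_of_le' hn
        exact absurd hmod (hN.not_isModularType_quotient hcard)

end Witness

/-! ### Groups with a cyclic subgroup of index p -/

section PowerAction

theorem exists_zmod_monoidHom {K : Type*} [Group K] {m : ℕ} {k : K} (hk : k ^ m = 1) :
    ∃ f : Multiplicative (ZMod m) →* K, f (Multiplicative.ofAdd 1) = k := by
  let f : {f : ℤ →+ Additive K // f m = 0} := ⟨zmultiplesHom _ (Additive.ofMul k), by
    rw [zmultiplesHom_apply, natCast_zsmul, ← ofMul_pow, hk, ofMul_one]⟩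
  have hf : ZMod.lift m f (1 : ZMod m) = Additive.ofMul k := by
    rw [← Int.cast_one, ZMod.lift_coe]
    exact one_zsmul _
  exact ⟨AddMonoidHom.toMultiplicativeLeft (ZMod.lift m f), congrArg Additive.toMul hf⟩

theorem exists_eq_ofAdd_one_pow {m : ℕ} [NeZero m] (x : Multiplicative (ZMod m)) :
    ∃ i : ℕ, x = Multiplicative.ofAdd (1 : ZMod m) ^ i :=
  ⟨x.toAdd.val, by rw [← ofAdd_nsmul, nsmul_one, ZMod.natCast_zmod_val, ofAdd_toAdd]⟩

theorem exists_zmod_powerAction {k m r : ℕ} [NeZero k] (h : r ^ k ≡ 1 [MOD m]) :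
    ∃ φ : Multiplicative (ZMod k) →* MulAut (Multiplicative (ZMod m)),
      ∀ x, φ (Multiplicative.ofAdd 1) x = x ^ r := by
  have hr : (r : ZMod m) ^ k = 1 := by
    exact_mod_cast (ZMod.natCast_eq_natCast_iff _ _ _).2 h
  obtain ⟨f, hf⟩ := exists_zmod_monoidHom (Units.pow_ofPowEqOne hr (NeZero.ne k))
  let toAut : (ZMod m)ˣ →* MulAut (Multiplicative (ZMod m)) :=
    (MulAutMultiplicative (ZMod m)).symm.toMonoidHom.comp
      (DistribMulAction.toAddAut (ZMod m)ˣ (ZMod m))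
  refine ⟨toAut.comp f, fun x => ?_⟩
  rw [MonoidHom.comp_apply, hf]
  exact congrArg Multiplicative.ofAdd (nsmul_eq_mul r x.toAdd).symm

theorem one_add_pow_modEq_one (p : ℕ) {a : ℕ} (ha : a ≠ 0) :
    (1 + p ^ a) ^ p ≡ 1 [MOD p ^ (a + 1)] := by
  refine ((Nat.modEq_iff_dvd).2 ?_).symm
  push_cast
  have hp : (p : ℤ) ∣ (1 + (p : ℤ) ^ a) - 1 := by
    rw [add_sub_cancel_left]; exact dvd_pow_self _ ha
  have h := mul_dvd_mul (dvd_geom_sum₂_self hp) (dvd_refl ((1 + (p : ℤ) ^ a) - 1))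
  rwa [(Commute.all _ _).geom_sum₂_mul, one_pow, add_sub_cancel_left, ← pow_succ'] at h

end PowerAction

section Recognition

variable {G : Type*} [Group G] {m p r : ℕ} {y b : G}

theorem mul_pow_of_conj_eq_pow (h : b * y * b⁻¹ = y ^ r) (k : ℕ) :
    (b * y) ^ k = y ^ (∑ i ∈ Finset.range k, r ^ (i + 1)) * b ^ k := by
  induction k with
  | zero => simp
  | succ k ih =>
    have hconj (j : ℕ) : b * y ^ j = y ^ (r * j) * b := by
      rw [pow_mul, ← h, conj_pow, inv_mul_cancel_right]
    have hsum : r * (1 + ∑ i ∈ Finset.range k, r ^ (i + 1)) =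
        ∑ i ∈ Finset.range (k + 1), r ^ (i + 1) := by
      rw [Finset.sum_range_succ', mul_add, Finset.mul_sum, add_comm]
      simp only [← pow_succ', mul_one, zero_add, pow_one]
    calc (b * y) ^ (k + 1)
        = b * y ^ (1 + ∑ i ∈ Finset.range k, r ^ (i + 1)) * b ^ k := by
          rw [pow_succ', ih, pow_add, pow_one]; group
      _ = y ^ (∑ i ∈ Finset.range (k + 1), r ^ (i + 1)) * b ^ (k + 1) := by
          rw [hconj, hsum, mul_assoc, ← pow_succ']

theorem nonempty_mulEquiv_semidirectProduct [Finite G] (hp : p.Prime) (hy : orderOf y = m)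
    (hyp : (Subgroup.zpowers y).index = p) (hb : b ^ p = 1) (hby : b ∉ Subgroup.zpowers y)
    (hconj : b * y * b⁻¹ = y ^ r)
    (φ : Multiplicative (ZMod p) →* MulAut (Multiplicative (ZMod m)))
    (hφ : ∀ x, φ (Multiplicative.ofAdd 1) x = x ^ r) :
    Nonempty (G ≃* Multiplicative (ZMod m) ⋊[φ] Multiplicative (ZMod p)) := by
  have : NeZero p := ⟨hp.ne_zero⟩
  have : NeZero m := ⟨hy ▸ (orderOf_pos y).ne'⟩
  obtain ⟨f, hf⟩ := exists_zmod_monoidHom (hy ▸ pow_orderOf_eq_one y : y ^ m = 1)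
  obtain ⟨g, hg⟩ := exists_zmod_monoidHom hb
  have hfφ (x) : f (φ (Multiplicative.ofAdd 1) x) = b * f x * b⁻¹ := by
    obtain ⟨i, rfl⟩ := exists_eq_ofAdd_one_pow x
    rw [hφ, map_pow, map_pow, hf, ← conj_pow, hconj, ← pow_mul, ← pow_mul, mul_comm]
  have hfφpow (i : ℕ) (x) :
      f (φ (Multiplicative.ofAdd 1 ^ i) x) = b ^ i * f x * (b ^ i)⁻¹ := by
    induction i generalizing x with
    | zero => simp
    | succ i ih => rw [pow_succ, map_mul, MulAut.mul_apply, ih, hfφ]; group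
  let F := SemidirectProduct.lift (φ := φ) f g fun z => by
    obtain ⟨i, rfl⟩ := exists_eq_ofAdd_one_pow z
    refine MonoidHom.ext fun x => ?_
    simp only [MonoidHom.comp_apply, map_pow g, hg]
    exact hfφpow i x
  have hFy : Subgroup.zpowers y ≤ F.range := Subgroup.zpowers_le.2
    ⟨SemidirectProduct.inl (Multiplicative.ofAdd 1), by rw [SemidirectProduct.lift_inl, hf]⟩
  have hFb : b ∈ F.range :=
    ⟨SemidirectProduct.inr (Multiplicative.ofAdd 1), by rw [SemidirectProduct.lift_inr, hg]⟩
  have hsurj : Function.Surjective F :=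
    MonoidHom.range_eq_top.1 (eq_top_of_le_of_index_prime (hyp ▸ hp) hFy hFb hby)
  have hcard : Nat.card (Multiplicative (ZMod m) ⋊[φ] Multiplicative (ZMod p)) = Nat.card G := by
    rw [SemidirectProduct.card, Nat.card_congr Multiplicative.toAdd,
      Nat.card_congr Multiplicative.toAdd, Nat.card_zmod, Nat.card_zmod,
      ← (Subgroup.zpowers y).card_mul_index, Nat.card_zpowers, hy, hyp]
  have : Finite (Multiplicative (ZMod m) ⋊[φ] Multiplicative (ZMod p)) :=
    Nat.finite_of_card_ne_zero (hcard ▸ Nat.card_pos.ne')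
  exact ⟨(MulEquiv.ofBijective F
    ((Nat.bijective_iff_surjective_and_card F).2 ⟨hsurj, hcard⟩)).symm⟩

theorem nonempty_mulEquiv_prod [Finite G] (hp : p.Prime) (hy : orderOf y = m)
    (hyp : (Subgroup.zpowers y).index = p) (hb : b ^ p = 1) (hby : b ∉ Subgroup.zpowers y)
    (hconj : Commute b y) :
    Nonempty (G ≃* Multiplicative (ZMod m) × Multiplicative (ZMod p)) :=
  (nonempty_mulEquiv_semidirectProduct hp hy hyp hb hby
    (by rw [hconj.eq, mul_inv_cancel_right, pow_one]) 1 fun x => by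
      rw [pow_one, MonoidHom.one_apply, MulAut.one_apply]).map
    fun e => e.trans SemidirectProduct.mulEquivProd

end Recognition

section Modular

open scoped commutatorElement

variable {G : Type*} [Group G] [Finite G] {p m : ℕ} {y b : G}

theorem mem_zpowers_of_orderOf_eq {x z : G} (hx : x ∈ Subgroup.zpowers y)
    (hz : z ∈ Subgroup.zpowers y) (h : orderOf x = orderOf z) : x ∈ Subgroup.zpowers z := by
  have heq : Subgroup.zpowers (⟨x, hx⟩ : Subgroup.zpowers y) = Subgroup.zpowers ⟨z, hz⟩ :=
    subgroup_eq_of_card_eq (by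
      rw [Nat.card_zpowers, Nat.card_zpowers, Subgroup.orderOf_mk, Subgroup.orderOf_mk, h])
  obtain ⟨k, hk⟩ := heq ▸ Subgroup.mem_zpowers (⟨x, hx⟩ : Subgroup.zpowers y)
  exact ⟨k, congrArg Subtype.val hk⟩

omit [Finite G] in
theorem exists_commutatorElement_orderOf_eq_prime [Fact p.Prime]
    (hcomm : Nat.card (commutator G) = p) (hyp : (Subgroup.zpowers y).index = p) :
    ∃ b : G, orderOf ⁅b, y⁆ = p := by
  have hp : p.Prime := Fact.out
  obtain ⟨b, hb⟩ : ∃ b : G, ⁅b, y⁆ ≠ 1 := by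
    by_contra! hy
    have := isMulCommutative_of_index_prime_of_le_center (hyp ▸ hp) (Subgroup.zpowers_le.2
      (Subgroup.mem_center_iff.2 fun b => commutatorElement_eq_one_iff_mul_comm.1 (hy b)))
    rw [(commutator_eq_bot_iff _).2 this, Subgroup.card_bot] at hcomm
    exact hp.ne_one hcomm.symm
  have hmem : ⁅b, y⁆ ∈ commutator G :=
    Subgroup.commutator_mem_commutator (Subgroup.mem_top b) (Subgroup.mem_top y)
  refine ⟨b, orderOf_eq_prime ?_ hb⟩
  exact hcomm ▸ congrArg Subtype.val (pow_card_eq_one' (x := (⟨_, hmem⟩ : commutator G)))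

theorem exists_conj_eq_pow [Fact p.Prime] (hG : IsPGroup p G)
    (hcomm : Nat.card (commutator G) = p) (hyp : (Subgroup.zpowers y).index = p)
    (hy : orderOf y = p ^ (m + 1)) : ∃ b : G, b * y * b⁻¹ = y ^ (1 + p ^ m) := by
  have hp : p.Prime := Fact.out
  obtain ⟨b, hb⟩ := exists_commutatorElement_orderOf_eq_prime hcomm hyp
  have hZ : commutator G ≤ Subgroup.center G := le_center_of_card_eq_prime hG hcomm
  have hby : ⁅b, y⁆ ∈ Subgroup.zpowers y := by
    have := normal_of_index_eq_prime hG hyp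
    exact mul_mem (this.conj_mem y (Subgroup.mem_zpowers y) b)
      (inv_mem (Subgroup.mem_zpowers y))
  have hq : orderOf (y ^ p ^ m) = p := by
    rw [orderOf_pow_of_dvd (pow_ne_zero _ hp.ne_zero) (hy ▸ pow_dvd_pow p m.le_succ), hy,
      pow_succ, Nat.mul_div_cancel_left _ (pow_pos hp.pos m)]
  obtain ⟨c, hc⟩ := (Submonoid.mem_powers_iff _ _).1 (mem_powers_iff_mem_zpowers.2
    (mem_zpowers_of_orderOf_eq (Subgroup.npow_mem_zpowers y _) hby (hq.trans hb.symm)))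
  have hbc : Commute ⁅b, y⁆ b := (Subgroup.mem_center_iff.1
    (hZ (Subgroup.commutator_mem_commutator (Subgroup.mem_top b) (Subgroup.mem_top y))) b).symm
  refine ⟨b ^ c, ?_⟩
  rw [add_comm, pow_succ, ← hc, ← commutatorElement_pow_left hbc, commutatorElement_def,
    inv_mul_cancel_right]

theorem exists_sum_pow_eq {r p : ℤ} (h : p ^ 2 ∣ r - 1) (k : ℕ) :
    ∃ t, ∑ i ∈ Finset.range k, r ^ (i + 1) = k + p ^ 2 * t := by
  have hdvd : p ^ 2 ∣ ∑ i ∈ Finset.range k, (r ^ (i + 1) - 1) :=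
    Finset.dvd_sum fun i _ => h.trans (sub_one_dvd_pow_sub_one _ _)
  obtain ⟨t, ht⟩ := hdvd
  refine ⟨t, ?_⟩
  rw [← ht, Finset.sum_sub_distrib]
  simp

omit [Finite G] in
/-- Replace `b` by `b * y ^ j`: as `(b * y ^ j) ^ p = y ^ (j * s) * b ^ p` where `s / p` is prime to
`p`, some `j` makes the right side trivial. -/
theorem exists_pow_eq_one_conj_eq_pow (hp : p.Prime)
    (hyp : (Subgroup.zpowers y).index = p) [(Subgroup.zpowers y).Normal]
    (hy : orderOf y = p ^ (m + 3))
    (hconj : b * y * b⁻¹ = y ^ (1 + p ^ (m + 2))) :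
    ∃ b : G, b ^ p = 1 ∧ b ∉ Subgroup.zpowers y ∧ b * y * b⁻¹ = y ^ (1 + p ^ (m + 2)) := by
  obtain ⟨k, hk⟩ := Subgroup.mem_zpowers_iff.1 (hyp ▸ (Subgroup.zpowers y).pow_index_mem b)
  have hy1 : y ^ p ^ (m + 2) ≠ 1 := pow_ne_one_of_lt_orderOf (pow_pos hp.pos _).ne'
    (hy ▸ Nat.pow_lt_pow_right hp.one_lt (Nat.lt_succ_self _))
  obtain ⟨l, rfl⟩ : (p : ℤ) ∣ k := by
    have hfix : b * y ^ k * b⁻¹ = y ^ k := by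
      rw [hk, (Commute.self_pow b p).eq, mul_inv_cancel_right]
    rw [← conj_zpow, hconj, ← zpow_natCast, ← zpow_mul, Nat.cast_add, Nat.cast_one, one_add_mul,
      zpow_add, mul_eq_left, ← orderOf_dvd_iff_zpow_eq_one, hy, pow_succ, Nat.cast_mul] at hfix
    exact Int.dvd_of_mul_dvd_mul_left (mod_cast (pow_pos hp.pos _).ne') hfix
  obtain ⟨t, ht⟩ := exists_sum_pow_eq (r := 1 + (p : ℤ) ^ (m + 2)) (p := p)
    (by rw [add_sub_cancel_left]; exact pow_dvd_pow _ (Nat.le_add_left 2 m)) p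
  obtain ⟨u, v, huv⟩ : IsCoprime (1 + p * t) ((p : ℤ) ^ (m + 2)) :=
    IsCoprime.pow_right ⟨1, -t, by ring⟩
  have hconj_zpow : b * y ^ (-l * u) * b⁻¹ = (y ^ (-l * u)) ^ (1 + p ^ (m + 2)) := by
    rw [← conj_zpow, hconj, ← zpow_natCast, ← zpow_natCast, ← zpow_mul, ← zpow_mul, mul_comm]
  have hconj_y : b * y ^ (-l * u) * y * (b * y ^ (-l * u))⁻¹ = y ^ (1 + p ^ (m + 2)) := by
    rw [← hconj]; group
  refine ⟨b * y ^ (-l * u), ?_, fun ⟨i, hi⟩ => hy1 ?_, hconj_y⟩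
  · rw [mul_pow_of_conj_eq_pow hconj_zpow, ← hk, ← zpow_natCast, ← zpow_mul]
    push_cast
    rw [ht, ← zpow_add, ← orderOf_dvd_iff_zpow_eq_one, hy]
    refine ⟨l * v, ?_⟩
    push_cast
    linear_combination (-p * l : ℤ) * huv
  · rw [← hi, (Commute.zpow_self y i).eq, mul_inv_cancel_right, pow_add, pow_one] at hconj_y
    exact mul_eq_left.1 hconj_y.symm

theorem IsModularType.nilpotencyClass_eq_two [Fact p.Prime] (hG : IsPGroup p G)
    (h : IsModularType p G) : Group.nilpotencyClass G = 2 := by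
  have hZ : commutator G ≤ Subgroup.center G := le_center_of_card_eq_prime hG h.1
  have hcomm : ¬IsMulCommutative G := fun hc => by
    have hp := h.1
    rw [(commutator_eq_bot_iff _).2 hc, Subgroup.card_bot] at hp
    exact (Fact.out : p.Prime).ne_one hp.symm
  have := hG.isNilpotent
  have hab : IsMulCommutative (G ⧸ commutator G) :=
    Subgroup.Normal.quotient_commutative_iff_commutator_le.2 le_rfl
  refine le_antisymm ?_
    (not_le.1 (mt Group.IsNilpotent.nilpotencyClass_le_one_iff.1 hcomm))
  exact (Group.nilpotencyClass_le_of_ker_le_center (QuotientGroup.mk' (commutator G))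
      ((QuotientGroup.ker_mk' _).trans_le hZ)).trans
    (Nat.succ_le_succ (Group.IsNilpotent.nilpotencyClass_le_one_iff.2 hab))

theorem IsModularType.nonempty_mulEquiv [Fact p.Prime] (hcard : Nat.card G = p ^ (m + 4))
    (h : IsModularType p G) :
    ∃ φ : Multiplicative (ZMod p) →* MulAut (Multiplicative (ZMod (p ^ (m + 3)))),
      (∀ x, φ (Multiplicative.ofAdd 1) x = x ^ (1 + p ^ (m + 2))) ∧
      Nonempty (G ≃* Multiplicative (ZMod (p ^ (m + 3))) ⋊[φ] Multiplicative (ZMod p)) := by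
  have hp : p.Prime := Fact.out
  have : NeZero p := ⟨hp.ne_zero⟩
  have hG : IsPGroup p G := IsPGroup.of_card hcard
  obtain ⟨hcomm, y, hyp⟩ := h
  have hy : orderOf y = p ^ (m + 3) := by
    have hmul := (Subgroup.zpowers y).card_mul_index
    rw [Nat.card_zpowers, hyp, hcard, pow_succ] at hmul
    exact Nat.eq_of_mul_eq_mul_right hp.pos hmul
  have := normal_of_index_eq_prime hG hyp
  obtain ⟨b, hb⟩ := exists_conj_eq_pow hG hcomm hyp hy
  obtain ⟨b, hbp, hby, hconj⟩ := exists_pow_eq_one_conj_eq_pow hp hyp hy hb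
  obtain ⟨φ, hφ⟩ := exists_zmod_powerAction (one_add_pow_modEq_one p (Nat.succ_ne_zero (m + 1)))
  exact ⟨φ, hφ, nonempty_mulEquiv_semidirectProduct hp hy hyp hbp hby hconj φ hφ⟩

end Modular

theorem nonempty_mulEquiv_prod_of_isCyclic_quotient {G : Type*} [Group G] [Finite G] {p m : ℕ}
    [Fact p.Prime] (hcard : Nat.card G = p ^ (m + 1)) {K : Subgroup G} [K.Normal]
    (hK : K.index = p ^ m) (hQ : IsCyclic (G ⧸ K)) (hG : ¬IsCyclic G) :
    Nonempty (G ≃* Multiplicative (ZMod (p ^ m)) × Multiplicative (ZMod p)) := by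
  have hp : p.Prime := Fact.out
  have hKp : Nat.card K = p := by
    have hmul := K.card_mul_index
    rw [hK, hcard, pow_succ'] at hmul
    exact Nat.eq_of_mul_eq_mul_right (pow_pos hp.pos m) hmul
  have : IsMulCommutative G := (QuotientGroup.mk' K).isMulCommutative_of_isCyclic_of_ker_le_center
    (by rw [QuotientGroup.ker_mk']; exact le_center_of_card_eq_prime (IsPGroup.of_card hcard) hKp)
  obtain ⟨y, hyQ⟩ := hQ.exists_ofOrder_eq_natCard
  obtain ⟨y, rfl⟩ := QuotientGroup.mk_surjective y
  have hyQ : orderOf (y : G ⧸ K) = p ^ m := hyQ.trans hK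
  have hy : orderOf y = p ^ m := by
    have hdvd := hyQ ▸ orderOf_map_dvd (QuotientGroup.mk' K) y
    obtain ⟨k, hk, hky⟩ := (Nat.dvd_prime_pow hp).1 (hcard ▸ orderOf_dvd_natCard y)
    have hmk : m ≤ k := (Nat.pow_dvd_pow_iff_le_right hp.one_lt).1 (hky ▸ hdvd)
    have hkm : k ≠ m + 1 := fun h => hG (isCyclic_of_orderOf_eq_card y (by rw [hky, h, hcard]))
    rw [hky, show k = m by omega]
  have hidx : (Subgroup.zpowers y).index = p := by
    have hmul := (Subgroup.zpowers y).card_mul_index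
    rw [Nat.card_zpowers, hy, hcard, pow_succ] at hmul
    exact Nat.eq_of_mul_eq_mul_left (pow_pos hp.pos m) hmul
  obtain ⟨b, hbK, hb1⟩ := K.bot_or_exists_ne_one.resolve_left fun h => by
    rw [h, Subgroup.card_bot] at hKp
    exact hp.ne_one hKp.symm
  have hbp : b ^ p = 1 := hKp ▸ congrArg Subtype.val (pow_card_eq_one' (x := (⟨b, hbK⟩ : K)))
  refine nonempty_mulEquiv_prod hp hy hidx hbp ?_ (mul_comm' b y)
  rintro ⟨i, rfl⟩
  have hi : (y : G ⧸ K) ^ i = 1 := (QuotientGroup.eq_one_iff _).2 hbK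
  exact hb1 (orderOf_dvd_iff_zpow_eq_one.1 (hy ▸ hyQ ▸ orderOf_dvd_iff_zpow_eq_one.2 hi))

/-! ### Irreducible representations -/

section Irreducible

open Representation

variable {k G V : Type*} [Field k] [Group G] [AddCommGroup V] [Module k V]
  {ρ : Representation k G V}

theorem isIrreducible_comp_iff {H : Type*} [Group H] {f : H →* G} (hf : Function.Surjective f) :
    IsIrreducible (ρ.comp f) ↔ IsIrreducible ρ := by
  let e : Subrepresentation (ρ.comp f : Representation k H V) ≃o Subrepresentation ρ :=
    { toFun := fun W => ⟨W.toSubmodule, fun g => by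
        obtain ⟨h, rfl⟩ := hf g
        exact fun _ hv => W.apply_mem_toSubmodule h hv⟩
      invFun := fun W => ⟨W.toSubmodule, fun h _ hv => W.apply_mem_toSubmodule (f h) hv⟩
      left_inv := fun _ => Subrepresentation.toSubmodule_injective rfl
      right_inv := fun _ => Subrepresentation.toSubmodule_injective rfl
      map_rel_iff' := Iff.rfl }
  exact e.isSimpleOrder_iff

theorem isIrreducible_lift_iff {K : Subgroup G} [K.Normal] (hK : K ≤ MonoidHom.ker ρ) :
    IsIrreducible (QuotientGroup.lift K ρ hK : Representation k (G ⧸ K) V) ↔ IsIrreducible ρ :=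
  (isIrreducible_comp_iff (ρ := QuotientGroup.lift K ρ hK) (QuotientGroup.mk'_surjective K)).symm

theorem nontrivial_of_isIrreducible (hρ : IsIrreducible ρ) : Nontrivial V := by
  by_contra hV
  rw [not_nontrivial_iff_subsingleton] at hV
  exact bot_ne_top (Subrepresentation.toSubmodule_injective (ρ := ρ) (Subsingleton.elim _ _))

theorem eq_bot_or_eq_top_of_isIrreducible (hρ : IsIrreducible ρ) {W : Submodule k V}
    (hW : ∀ g, ∀ w ∈ W, ρ g w ∈ W) : W = ⊥ ∨ W = ⊤ :=
  (hρ.eq_bot_or_eq_top ⟨W, fun g w hw => hW g w hw⟩).imp (congrArg Subrepresentation.toSubmodule)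
    (congrArg Subrepresentation.toSubmodule)

theorem isIrreducible_of_finrank_eq_one (h : Module.finrank k V = 1) : IsIrreducible ρ := by
  have hsimple : IsSimpleModule k V := isSimpleModule_iff_finrank_eq_one.2 h
  exact
    { exists_pair_ne := ⟨⊥, ⊤, fun h => bot_ne_top (congrArg Subrepresentation.toSubmodule h)⟩
      eq_bot_or_eq_top := fun W => (eq_bot_or_eq_top W.toSubmodule).imp
        (fun h => Subrepresentation.toSubmodule_injective h)
        (fun h => Subrepresentation.toSubmodule_injective h) }

section Scalar

variable [Nontrivial V]

theorem exists_monoidHom_of_forall_eq_smul {H : Type*} [Monoid H] {f : H →* Module.End k V}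
    (hf : ∀ x, ∃ c : k, f x = c • 1) : ∃ χ : H →* k, ∀ x, f x = χ x • 1 := by
  choose c hc using hf
  have hinj := smul_left_injective k (one_ne_zero : (1 : Module.End k V) ≠ 0)
  exact ⟨{ toFun := c
           map_one' := hinj (by simp [← hc])
           map_mul' := fun x y => hinj (by
             change c (x * y) • 1 = (c x * c y) • (1 : Module.End k V)
             rw [← hc, map_mul, hc x, hc y, smul_mul_smul_comm, one_mul]) }, hc⟩

theorem isCyclic_of_forall_eq_smul {H : Type*} [Group H] [Finite H] {f : H →* Module.End k V}
    (hinj : Function.Injective f) (hf : ∀ x, ∃ c : k, f x = c • 1) : IsCyclic H := by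
  obtain ⟨χ, hχ⟩ := exists_monoidHom_of_forall_eq_smul hf
  exact isCyclic_of_injective_ringHom χ fun x y hxy => hinj (by rw [hχ, hχ, hxy])

end Scalar

theorem isCyclic_of_finrank_eq_one [Finite G] (hinj : Function.Injective ρ)
    (h : Module.finrank k V = 1) : IsCyclic G := by
  have := Module.nontrivial_of_finrank_pos (R := k) (h ▸ one_pos : 0 < Module.finrank k V)
  refine isCyclic_of_forall_eq_smul hinj fun g => ?_
  obtain ⟨c, hc⟩ := (LinearEquiv.smul_id_of_finrank_eq_one h).surjective (ρ g)
  exact ⟨c, hc.symm⟩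

section AlgClosed

variable [IsAlgClosed k] [FiniteDimensional k V]

theorem exists_eq_smul_of_forall_commute (hρ : IsIrreducible ρ) {T : Module.End k V}
    (hT : ∀ g, Commute T (ρ g)) : ∃ c : k, T = c • 1 := by
  let f : IntertwiningMap ρ ρ := ⟨T, hT⟩
  obtain ⟨c, hc⟩ := (IsIrreducible.algebraMap_intertwiningMap_bijective_of_isAlgClosed
    (ρ := ρ)).surjective f
  exact ⟨c, congrArg IntertwiningMap.toLinearMap hc.symm⟩

theorem exists_apply_eq_smul_of_mem_center (hρ : IsIrreducible ρ) {z : G}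
    (hz : z ∈ Subgroup.center G) : ∃ c : k, ρ z = c • 1 :=
  exists_eq_smul_of_forall_commute hρ fun g =>
    Commute.map (Subgroup.mem_center_iff.1 hz g).symm ρ

theorem isCyclic_center_of_injective [Finite G] (hρ : IsIrreducible ρ)
    (hinj : Function.Injective ρ) : IsCyclic (Subgroup.center G) := by
  have := nontrivial_of_isIrreducible hρ
  exact isCyclic_of_forall_eq_smul (f := ρ.comp (Subgroup.center G).subtype)
    (hinj.comp Subtype.val_injective) fun z => exists_apply_eq_smul_of_mem_center hρ z.2

theorem finrank_eq_one_of_forall_mem_eq_smul (hρ : IsIrreducible ρ) {A : Subgroup G}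
    (hA : A.index.Prime) (h : ∀ a ∈ A, ∃ c : k, ρ a = c • 1) : Module.finrank k V = 1 := by
  let K := MonoidHom.ker ρ
  let σ : Representation k (G ⧸ K) V := QuotientGroup.lift K ρ le_rfl
  have hAC : A ≤ (Subgroup.center (G ⧸ K)).comap (QuotientGroup.mk' K) := fun a ha => by
    obtain ⟨c, hc⟩ := h a ha
    refine Subgroup.mem_center_iff.2 fun q => (QuotientGroup.injective_lift_iff K ρ le_rfl).2 rfl ?_
    rw [map_mul, map_mul, QuotientGroup.mk'_apply, QuotientGroup.lift_mk, hc, mul_smul_comm,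
      smul_mul_assoc, mul_one, one_mul]
  have hindex : (Subgroup.center (G ⧸ K)).index = _ :=
    (Subgroup.index_comap_of_surjective _ (QuotientGroup.mk'_surjective K)).symm
  have hcomm : IsMulCommutative (G ⧸ K) := by
    rcases eq_or_eq_top_of_le_of_index_prime hA hAC with hC | hC
    · exact isMulCommutative_of_index_prime_of_le_center (by rwa [hindex, hC]) le_rfl
    · rw [hC, Subgroup.index_top, Subgroup.index_eq_one] at hindex
      exact Subgroup.center_eq_top_iff.1 hindex
  have : IsIrreducible σ := (isIrreducible_lift_iff le_rfl).2 hρ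
  exact IsIrreducible.finrank_eq_one_of_isMulCommutative σ

end AlgClosed

end Irreducible

section Inertia

variable {G X : Type*} [Group G] {A : Subgroup G} [A.Normal]

/-- The inertia group in `G` of a function on a normal subgroup `A`: the stabilizer for the
conjugation action. -/
def inertia (χ : A → X) : Subgroup G where
  carrier := {g | ∀ a, χ (MulAut.conjNormal g a) = χ a}
  one_mem' := fun a => by simp
  mul_mem' := fun {g h} hg hh a => by rw [map_mul, MulAut.mul_apply, hg, hh]
  inv_mem' := fun {g} hg a => by rw [← hg, ← MulAut.mul_apply, ← map_mul, mul_inv_cancel, map_one,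
    MulAut.one_apply]

theorem le_inertia [IsMulCommutative A] (χ : A → X) : A ≤ inertia χ := fun b hb a => by
  congr 1
  ext
  rw [MulAut.conjNormal_apply, setLike_mul_comm hb a.2, mul_inv_cancel_right]

end Inertia

section Weight

open Representation
open scoped MonoidAlgebra IsMulCommutative

variable {k G V : Type*} [Field k] [Group G] [AddCommGroup V] [Module k V]
  {ρ : Representation k G V}

/-- The space of common eigenvectors of a representation on which every `g` acts as the scalar
`χ g`. -/
def weightSpace (ρ : Representation k G V) (χ : G → k) : Submodule k V :=
  ⨅ g, Module.End.eigenspace (ρ g) (χ g)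

theorem mem_weightSpace {χ : G → k} {v : V} : v ∈ weightSpace ρ χ ↔ ∀ g, ρ g v = χ g • v := by
  simp [weightSpace]

theorem iSupIndep_weightSpace [IsMulCommutative G] : iSupIndep (weightSpace ρ) := by
  have hind := Module.End.independent_iInf_maxGenEigenspace_of_forall_mapsTo (fun g => ρ g)
    fun g h c => Module.End.mapsTo_maxGenEigenspace_of_comm
      ((Commute.map (show Commute h g from mul_comm' h g) ρ)) c
  exact hind.mono fun χ => iInf_mono fun g => Module.End.eigenspace_le_maxGenEigenspace

theorem exists_weightSpace_ne_bot [IsMulCommutative G] [IsAlgClosed k] [FiniteDimensional k V]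
    [Nontrivial V] (ρ : Representation k G V) : ∃ χ, weightSpace ρ χ ≠ ⊥ := by
  have : IsArtinian k[G] ρ.asModule := isArtinian_of_tower k inferInstance
  have : Nontrivial ρ.asModule := ‹Nontrivial V›
  obtain ⟨N, hN⟩ := IsAtomic.exists_atom (Submodule k[G] ρ.asModule)
  have hN' : IsSimpleModule k[G] N := isSimpleModule_iff_isAtom.2 hN
  have : FiniteDimensional k N := inferInstanceAs (FiniteDimensional k (N.restrictScalars k))
  have h1 : Module.finrank k N = 1 := IsSimpleModule.finrank_eq_one_of_isMulCommutative k[G] N k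
  obtain ⟨v, hv, hspan⟩ := finrank_eq_one_iff'.1 h1
  choose χ hχ using fun g => hspan (MonoidAlgebra.of k G g • v)
  refine ⟨χ, (Submodule.ne_bot_iff _).2 ⟨ρ.asModuleEquiv v, mem_weightSpace.2 fun g => ?_, ?_⟩⟩
  · have hg : ρ.asModuleEquiv (MonoidAlgebra.of k G g • (v : ρ.asModule)) =
        χ g • ρ.asModuleEquiv v := congrArg (fun w : N => ρ.asModuleEquiv w) (hχ g).symm
    rwa [asModuleEquiv_map_smul, asAlgebraHom_of] at hg
  · simpa using hv

section Clifford

variable {A : Subgroup G} [A.Normal] {χ : A → k} {v : V}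

theorem apply_mem_weightSpace (hv : v ∈ weightSpace (ρ.comp A.subtype) χ) (g : G) :
    ρ g v ∈ weightSpace (ρ.comp A.subtype) fun a => χ (MulAut.conjNormal g⁻¹ a) := by
  rw [mem_weightSpace] at hv ⊢
  intro a
  have hg : (a : G) * g = g * (MulAut.conjNormal g⁻¹ a : A) := by
    rw [MulAut.conjNormal_apply]
    group
  calc ρ a (ρ g v) = ρ g (ρ (MulAut.conjNormal g⁻¹ a : A) v) := by
        rw [← Module.End.mul_apply, ← map_mul, hg, map_mul, Module.End.mul_apply]
    _ = χ (MulAut.conjNormal g⁻¹ a) • ρ g v := by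
        rw [← map_smul]
        exact congrArg (ρ g) (hv (MulAut.conjNormal g⁻¹ a))

theorem weightSpace_eq_top_of_inertia_eq_top (hρ : IsIrreducible ρ)
    (hχ : weightSpace (ρ.comp A.subtype) χ ≠ ⊥) (h : inertia χ = ⊤) :
    weightSpace (ρ.comp A.subtype) χ = ⊤ := by
  refine (eq_bot_or_eq_top_of_isIrreducible hρ fun g w hw => ?_).resolve_left hχ
  have hg : g⁻¹ ∈ inertia χ := h ▸ Subgroup.mem_top _
  have hw' := apply_mem_weightSpace hw g
  rwa [funext hg] at hw'

theorem linearIndependent_out_apply [IsMulCommutative A]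
    (hv : v ∈ weightSpace (ρ.comp A.subtype) χ) (hv0 : v ≠ 0) (h : inertia χ ≤ A) :
    LinearIndependent k fun q : G ⧸ A => ρ q.out v := by
  let χ' : G ⧸ A → A → k := fun q a => χ (MulAut.conjNormal q.out⁻¹ a)
  have hχ' : Function.Injective χ' := fun q r hqr => by
    rw [← QuotientGroup.out_eq' q, ← QuotientGroup.out_eq' r, QuotientGroup.eq]
    refine h fun a => ?_
    have hqr' := congrFun hqr (MulAut.conjNormal r.out a)
    simpa only [χ', ← MulAut.mul_apply, ← map_mul, inv_mul_cancel, map_one, MulAut.one_apply]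
      using hqr'
  exact (iSupIndep_weightSpace.comp hχ').linearIndependent _
    (fun q => apply_mem_weightSpace hv _) fun q hq =>
      hv0 ((ρ.apply_bijective q.out).injective (hq.trans (map_zero _).symm))

end Clifford

theorem span_range_out_apply_eq_top (hρ : IsIrreducible ρ) {A : Subgroup G} {v : V} (hv0 : v ≠ 0)
    (hv : ∀ a ∈ A, ρ a v ∈ Submodule.span k {v}) :
    Submodule.span k (Set.range fun q : G ⧸ A => ρ q.out v) = ⊤ := by
  let W := Submodule.span k (Set.range fun q : G ⧸ A => ρ q.out v)
  have hmem : ∀ g, ρ g v ∈ W := fun g => by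
    have ha : (g : G ⧸ A).out⁻¹ * g ∈ A := QuotientGroup.eq.1 (QuotientGroup.out_eq' _)
    obtain ⟨c, hc⟩ := Submodule.mem_span_singleton.1 (hv _ ha)
    rw [← mul_inv_cancel_left (g : G ⧸ A).out g, map_mul, Module.End.mul_apply, ← hc, map_smul]
    exact Submodule.smul_mem _ c (Submodule.subset_span ⟨_, rfl⟩)
  have hmap : ∀ g, W.map (ρ g) ≤ W := fun g => by
    rw [Submodule.map_span_le]
    rintro _ ⟨q, rfl⟩
    simpa using hmem (g * q.out)
  refine (eq_bot_or_eq_top_of_isIrreducible hρ fun g w hw =>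
    hmap g (Submodule.mem_map_of_mem hw)).resolve_left fun hbot => hv0 ?_
  simpa [hbot] using hmem 1

theorem finrank_eq_one_or_eq_index [IsAlgClosed k] [FiniteDimensional k V] (hρ : IsIrreducible ρ)
    {A : Subgroup G} [A.Normal] [IsMulCommutative A] (hA : A.index.Prime) :
    Module.finrank k V = 1 ∨ Module.finrank k V = A.index := by
  have := nontrivial_of_isIrreducible hρ
  obtain ⟨χ, hχ⟩ := exists_weightSpace_ne_bot (ρ.comp A.subtype)
  rcases eq_or_eq_top_of_le_of_index_prime hA (le_inertia χ) with h | h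
  · right
    obtain ⟨v, hv, hv0⟩ := (Submodule.ne_bot_iff _).1 hχ
    have hspan := span_range_out_apply_eq_top hρ (A := A) hv0 fun a ha =>
      Submodule.mem_span_singleton.2 ⟨_, (mem_weightSpace.1 hv ⟨a, ha⟩).symm⟩
    exact Module.finrank_eq_nat_card_basis
      (.mk (linearIndependent_out_apply hv hv0 h.le) hspan.ge)
  · refine Or.inl (finrank_eq_one_of_forall_mem_eq_smul hρ hA fun a ha => ⟨χ ⟨a, ha⟩, ?_⟩)
    ext v
    have hv : v ∈ weightSpace (ρ.comp A.subtype) χ :=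
      weightSpace_eq_top_of_inertia_eq_top hρ hχ h ▸ Submodule.mem_top
    exact mem_weightSpace.1 hv ⟨a, ha⟩

end Weight

section SimpleSpectrum

variable {k V ι : Type*} [Field k] [AddCommGroup V] [Module k V] {b : Module.Basis ι k V}
  {T : Module.End k V} {ν : ι → k}

theorem exists_apply_eq_smul_of_commute (hν : Function.Injective ν) (hT : ∀ i, T (b i) = ν i • b i)
    {S : Module.End k V} (hS : Commute T S) (i : ι) : ∃ c : k, S (b i) = c • b i := by
  have hcoord : ∀ j, b.coord j ∘ₗ T = ν j • b.coord j := fun j => b.ext fun i => by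
    rcases eq_or_ne i j with rfl | hij
    · simp [hT]
    · simp [hT, hij]
  refine ⟨b.coord i (S (b i)), b.ext_elem fun j => ?_⟩
  rcases eq_or_ne i j with rfl | hij
  · simp
  · have hTS : T (S (b i)) = ν i • S (b i) := by
      rw [← map_smul, ← hT]
      exact LinearMap.congr_fun hS (b i)
    have hj : ν j * b.coord j (S (b i)) = ν i * b.coord j (S (b i)) := by
      simpa [hTS] using (LinearMap.congr_fun (hcoord j) (S (b i))).symm
    simpa [hij, hν.ne hij.symm] using hj

theorem commute_of_commute_of_injective (hν : Function.Injective ν)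
    (hT : ∀ i, T (b i) = ν i • b i) {S S' : Module.End k V} (hS : Commute T S)
    (hS' : Commute T S') : Commute S S' := by
  refine b.ext fun i => ?_
  obtain ⟨c, hc⟩ := exists_apply_eq_smul_of_commute hν hT hS i
  obtain ⟨c', hc'⟩ := exists_apply_eq_smul_of_commute hν hT hS' i
  rw [Module.End.mul_apply, Module.End.mul_apply, hc, hc', map_smul, map_smul, hc, hc', smul_comm]

end SimpleSpectrum

section Centralizer

open Representation
open scoped commutatorElement

variable {k G V : Type*} [Field k] [Group G] [AddCommGroup V] [Module k V]
  {ρ : Representation k G V} [IsAlgClosed k] [FiniteDimensional k V] {x : G}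

/-- Conjugating `x` by `g` multiplies the eigenvalues of `ρ x` by the scalar through which the
central element `⁅g, x⁆` acts. -/
theorem exists_injective_hasEigenvector (hρ : IsIrreducible ρ) (hinj : Function.Injective ρ)
    (hx : ∀ g : G, ⁅g, x⁆ ∈ Subgroup.center G) :
    ∃ (ν : G ⧸ Subgroup.centralizer {x} → k) (w : G ⧸ Subgroup.centralizer {x} → V),
      Function.Injective ν ∧ ∀ q, Module.End.HasEigenvector (ρ x) (ν q) (w q) := by
  have := nontrivial_of_isIrreducible hρ
  obtain ⟨μ, hμ⟩ := Module.End.exists_eigenvalue (ρ x)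
  obtain ⟨v, hv⟩ := hμ.exists_hasEigenvector
  choose c hc using fun g => exists_apply_eq_smul_of_mem_center hρ (hx g)
  have hconj : ∀ g, g * x * g⁻¹ = ⁅g, x⁆ * x := fun g => by rw [commutatorElement_def]; group
  have hμ0 : μ ≠ 0 := by
    rintro rfl
    refine hv.2 ((ρ.apply_bijective x).injective ?_)
    rw [hv.apply_eq_smul, zero_smul, map_zero]
  refine ⟨fun q => c q.out * μ, fun q => ρ q.out⁻¹ v, fun q r hqr => ?_, fun q => ⟨?_, ?_⟩⟩
  · have hcomm : ⁅q.out, x⁆ = ⁅r.out, x⁆ := hinj (by rw [hc, hc, mul_right_cancel₀ hμ0 hqr])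
    have hconj' : q.out * x * q.out⁻¹ = r.out * x * r.out⁻¹ := by rw [hconj, hconj, hcomm]
    rw [← QuotientGroup.out_eq' q, ← QuotientGroup.out_eq' r, QuotientGroup.eq,
      Subgroup.mem_centralizer_singleton_iff]
    calc q.out⁻¹ * r.out * x = q.out⁻¹ * (r.out * x * r.out⁻¹) * r.out := by group
      _ = x * (q.out⁻¹ * r.out) := by rw [← hconj']; group
  · rw [Module.End.mem_eigenspace_iff]
    have hg : x * q.out⁻¹ = q.out⁻¹ * (⁅q.out, x⁆ * x) := by rw [← hconj]; group
    rw [← Module.End.mul_apply, ← map_mul, hg, map_mul, map_mul, hc]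
    simp [hv.apply_eq_smul, smul_smul]
  · exact fun h => hv.2 ((ρ.apply_bijective q.out⁻¹).injective (h.trans (map_zero _).symm))

variable [Finite G]

theorem index_centralizer_le_finrank (hρ : IsIrreducible ρ) (hinj : Function.Injective ρ)
    (hx : ∀ g : G, ⁅g, x⁆ ∈ Subgroup.center G) :
    (Subgroup.centralizer {x}).index ≤ Module.finrank k V := by
  obtain ⟨ν, w, hν, hw⟩ := exists_injective_hasEigenvector hρ hinj hx
  have := Fintype.ofFinite (G ⧸ Subgroup.centralizer {x})
  rw [Subgroup.index, Nat.card_eq_fintype_card]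
  exact (Module.End.eigenvectors_linearIndependent' _ ν hν w hw).fintype_card_le_finrank

theorem isMulCommutative_centralizer (hρ : IsIrreducible ρ) (hinj : Function.Injective ρ)
    (hx : ∀ g : G, ⁅g, x⁆ ∈ Subgroup.center G)
    (h : (Subgroup.centralizer {x}).index = Module.finrank k V) :
    IsMulCommutative (Subgroup.centralizer {x}) := by
  obtain ⟨ν, w, hν, hw⟩ := exists_injective_hasEigenvector hρ hinj hx
  have := Fintype.ofFinite (G ⧸ Subgroup.centralizer {x})
  have hcomm : ∀ a ∈ Subgroup.centralizer {x}, Commute (ρ x) (ρ a) := fun a ha =>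
    Commute.map (Subgroup.mem_centralizer_singleton_iff.1 ha).symm ρ
  refine ⟨⟨fun a b => Subtype.ext (hinj ?_)⟩⟩
  change ρ (a * b) = ρ (b * a)
  rw [map_mul, map_mul]
  let B := basisOfLinearIndependentOfCardEqFinrank' w
    (Module.End.eigenvectors_linearIndependent' _ ν hν w hw) (Nat.card_eq_fintype_card.symm.trans h)
  exact commute_of_commute_of_injective (b := B) hν
    (fun q => by simpa [B] using (hw q).apply_eq_smul) (hcomm a a.2) (hcomm b b.2)

theorem exists_normal_isMulCommutative_index_eq {p : ℕ} [Fact p.Prime] (hG : IsPGroup p G)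
    (hρ : IsIrreducible ρ) (hinj : Function.Injective ρ) (hp : Module.finrank k V = p) :
    ∃ A : Subgroup G, A.Normal ∧ IsMulCommutative A ∧ A.index = p := by
  have hp1 : p ≠ 1 := (Fact.out : p.Prime).ne_one
  have hcomm : ¬IsMulCommutative G := fun _ =>
    hp1 (hp.symm.trans (IsIrreducible.finrank_eq_one_of_isMulCommutative ρ))
  have hnt : Nontrivial (G ⧸ Subgroup.center G) := by
    rw [QuotientGroup.nontrivial_iff]
    exact fun h => hcomm (Subgroup.center_eq_top_iff.1 h)
  have hcenter := (hG.to_quotient (Subgroup.center G)).center_nontrivial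
  obtain ⟨⟨q, hq⟩, hq1⟩ := exists_ne (1 : Subgroup.center (G ⧸ Subgroup.center G))
  obtain ⟨x, rfl⟩ := QuotientGroup.mk_surjective q
  have hx := mk_mem_center_iff.1 hq
  have hindex : (Subgroup.centralizer {x}).index = p := by
    obtain ⟨e, he⟩ := hG.index (Subgroup.centralizer {x})
    have hle : p ^ e ≤ p ^ 1 := by
      rw [pow_one, ← he, ← hp]
      exact index_centralizer_le_finrank hρ hinj hx
    have he0 : e ≠ 0 := by
      rintro rfl
      rw [pow_zero, Subgroup.index_eq_one, Subgroup.centralizer_eq_top_iff_subset,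
        Set.singleton_subset_iff] at he
      exact hq1 (Subtype.ext ((QuotientGroup.eq_one_iff x).2 he))
    have he1 := (Nat.pow_le_pow_iff_right (Fact.out : p.Prime).one_lt).1 hle
    rw [he, le_antisymm he1 (Nat.one_le_iff_ne_zero.2 he0), pow_one]
  exact ⟨_, normal_of_index_eq_prime hG hindex,
    isMulCommutative_centralizer hρ hinj hx (hindex.trans hp.symm), hindex⟩

end Centralizer

/-! ### Complex characters -/

section FDRep

open Representation

universe v w

variable {k : Type v} {G : Type w} [Field k] [Group G] {V W : FDRep k G}

theorem hom_apply_ρ (f : W ⟶ V) (g : G) (x : W) :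
    f.hom.hom.hom (W.ρ g x) = V.ρ g (f.hom.hom.hom x) :=
  congrArg (fun φ => φ.hom.hom x) (f.comm g)

theorem injective_of_mono (f : W ⟶ V) [Mono f] : Function.Injective f.hom.hom.hom := by
  have : Mono ((Action.forget (FGModuleCat k) G).map f) := inferInstance
  exact (ModuleCat.mono_iff_injective ((forget₂ (FGModuleCat k) (ModuleCat k)).map
    ((Action.forget (FGModuleCat k) G).map f))).1 inferInstance

theorem bijective_of_isIso (f : W ⟶ V) [IsIso f] : Function.Bijective f.hom.hom.hom :=
  Function.bijective_iff_has_inverse.2 ⟨(inv f).hom.hom.hom,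
    fun x => congrArg (fun φ => φ.hom.hom.hom x) (IsIso.hom_inv_id f),
    fun x => congrArg (fun φ => φ.hom.hom.hom x) (IsIso.inv_hom_id f)⟩

theorem isIso_of_bijective (f : W ⟶ V) (hf : Function.Bijective f.hom.hom.hom) : IsIso f := by
  let e := LinearEquiv.ofBijective f.hom.hom.hom hf
  let f' : V ⟶ W := ⟨InducedCategory.homMk (ModuleCat.ofHom e.symm.toLinearMap), fun g => by
    ext x
    refine e.injective ((e.apply_symm_apply _).trans ?_)
    exact ((hom_apply_ρ f g _).trans (congrArg (V.ρ g) (e.apply_symm_apply x))).symm⟩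
  refine ⟨f', ?_, ?_⟩
  · ext x
    exact e.symm_apply_apply x
  · ext x
    exact e.apply_symm_apply x

theorem isIrreducible_of_simple (hV : Simple V) : IsIrreducible V.ρ where
  exists_pair_ne := by
    refine ⟨⊥, ⊤, fun h => id_nonzero V ?_⟩
    ext x
    have hx : x ∈ (⊥ : Subrepresentation V.ρ) := h ▸ Submodule.mem_top
    exact hx
  eq_bot_or_eq_top U := by
    let f : FDRep.of U.toRepresentation ⟶ V :=
      ⟨InducedCategory.homMk (ModuleCat.ofHom U.toSubmodule.subtype), fun g => by ext x; rfl⟩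
    have hmono : Mono f := ⟨fun a b hab => by
      ext x
      exact congrArg (fun φ => φ.hom.hom.hom x) hab⟩
    by_cases hf : f = 0
    · refine Or.inl (Subrepresentation.toSubmodule_injective (eq_bot_iff.2 fun x hx => ?_))
      exact congrArg (fun φ => φ.hom.hom.hom (⟨x, hx⟩ : U.toSubmodule)) hf
    · have hiso : IsIso f := (Simple.mono_isIso_iff_nonzero f).2 hf
      refine Or.inr (Subrepresentation.toSubmodule_injective (eq_top_iff.2 fun x _ => ?_))
      obtain ⟨y, rfl⟩ := (bijective_of_isIso f).surjective x
      exact y.2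

theorem simple_of_isIrreducible (hV : IsIrreducible V.ρ) : Simple V where
  mono_isIso_iff_nonzero {W} f _ := by
    have := nontrivial_of_isIrreducible hV
    refine ⟨?_, fun hf => isIso_of_bijective f ⟨injective_of_mono f, ?_⟩⟩
    · rintro hiso rfl
      obtain ⟨x, hx⟩ := exists_ne (0 : V)
      obtain ⟨y, rfl⟩ := (bijective_of_isIso (0 : W ⟶ V)).surjective x
      exact hx rfl
    · refine LinearMap.range_eq_top.1 ((eq_bot_or_eq_top_of_isIrreducible hV ?_).resolve_left ?_)
      · rintro g _ ⟨y, rfl⟩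
        exact ⟨W.ρ g y, hom_apply_ρ f g y⟩
      · intro hr
        refine hf ?_
        ext x
        exact LinearMap.congr_fun (LinearMap.range_eq_bot.1 hr) x

theorem simple_iff_isIrreducible : Simple V ↔ IsIrreducible V.ρ :=
  ⟨isIrreducible_of_simple, simple_of_isIrreducible⟩

end FDRep

section Existence

open Representation

variable {k G : Type u} [Field k] [Group G]

theorem isIrreducible_ofModule' (M : Type*) [AddCommGroup M] [Module k M]
    [Module (MonoidAlgebra k G) M] [IsScalarTower k (MonoidAlgebra k G) M]
    [IsSimpleModule (MonoidAlgebra k G) M] :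
    IsIrreducible (ofModule' M : Representation k G M) := by
  let e : (ofModule' M : Representation k G M).asModule ≃ₗ[MonoidAlgebra k G] M :=
    { (ofModule' M : Representation k G M).asModuleEquiv with
      map_smul' r := LinearMap.congr_fun (AlgHom.congr_fun
        ((MonoidAlgebra.lift k (M →ₗ[k] M) G).apply_symm_apply (Algebra.lsmul k k M)) r) }
  exact (irreducible_iff_isSimpleModule_asModule _).2 (IsSimpleModule.congr e)

theorem exists_isCoatom_notMem {R : Type*} [Ring R] [IsSemisimpleRing R] {x : R} (hx : x ≠ 0) :
    ∃ m : Submodule R R, IsCoatom m ∧ x ∉ m := by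
  by_contra! h
  refine hx ((Submodule.mem_bot R).1 ?_)
  rw [← IsSemisimpleModule.jacobson_eq_bot R R, Module.jacobson, Submodule.mem_sInf]
  exact h

theorem exists_simple_apply_ne_one [Finite G] [NeZero (Nat.card G : k)] {g : G} (hg : g ≠ 1) :
    ∃ V : FDRep k G, Simple V ∧ V.ρ g ≠ 1 := by
  obtain ⟨m, hm, hgm⟩ := exists_isCoatom_notMem (R := MonoidAlgebra k G)
    (sub_ne_zero.2 fun h => hg (MonoidAlgebra.of_injective (h.trans (map_one _).symm)) :
      MonoidAlgebra.of k G g - 1 ≠ 0)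
  let M := MonoidAlgebra k G ⧸ m
  have : Module.Finite k M := Module.Finite.trans (MonoidAlgebra k G) M
  have : IsSimpleModule (MonoidAlgebra k G) M := isSimpleModule_iff_isCoatom.2 hm
  refine ⟨FDRep.of (ofModule' M), simple_iff_isIrreducible.2 (isIrreducible_ofModule' M),
    fun h => hgm ?_⟩
  have h1 : MonoidAlgebra.of k G g • (Submodule.Quotient.mk 1 : M) = Submodule.Quotient.mk 1 :=
    LinearMap.congr_fun h (Submodule.Quotient.mk 1 : M)
  rwa [← Submodule.Quotient.mk_smul, Submodule.Quotient.eq, smul_eq_mul, mul_one] at h1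

end Existence

section Character

open Representation

variable {p n : ℕ} {G H : Type} [Group G] [Group H]

theorem repKer_eq_ker (V : FDRep ℂ G) : repKer V = MonoidHom.ker V.ρ := by
  ext g
  rw [repKer, MonoidHom.mem_ker, ← Units.val_inj, asGroupHom_apply, Units.val_one,
    MonoidHom.mem_ker]

instance normal_repKer (V : FDRep ℂ G) : (repKer V).Normal :=
  MonoidHom.normal_ker _

theorem injective_iff_repKer_eq_bot {V : FDRep ℂ G} :
    Function.Injective V.ρ ↔ repKer V = ⊥ := by
  rw [repKer_eq_ker, MonoidHom.ker_eq_bot_iff]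

/-- The representation inflated along `f`. -/
noncomputable def inflation (f : G →* H) (V : FDRep ℂ H) : FDRep ℂ G :=
  FDRep.of (V.ρ.comp f)

theorem simple_inflation {f : G →* H} (hf : Function.Surjective f) {V : FDRep ℂ H}
    (hV : Simple V) : Simple (inflation f V) :=
  simple_iff_isIrreducible.2 ((isIrreducible_comp_iff hf).2 (simple_iff_isIrreducible.1 hV))

theorem repKer_inflation (f : G →* H) (V : FDRep ℂ H) :
    repKer (inflation f V) = (repKer V).comap f := by
  rw [repKer_eq_ker, repKer_eq_ker]
  rfl

theorem codegree_inflation {f : G →* H} (hf : Function.Surjective f) (V : FDRep ℂ H) :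
    codegree (inflation f V) = codegree V := by
  rw [codegree, repKer_inflation, Subgroup.index_comap_of_surjective _ hf]
  rfl

theorem codSet_subset_of_surjective {f : G →* H} (hf : Function.Surjective f) :
    codSet H ⊆ codSet G := by
  rintro _ ⟨V, hV, rfl⟩
  exact ⟨inflation f V, simple_inflation hf hV, codegree_inflation hf V⟩

theorem cdSet_subset_of_surjective {f : G →* H} (hf : Function.Surjective f) :
    cdSet H ⊆ cdSet G := by
  rintro _ ⟨V, hV, rfl⟩
  exact ⟨inflation f V, simple_inflation hf hV, rfl⟩

theorem exists_simple_quotient_repKer {V : FDRep ℂ G} (hV : Simple V) :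
    ∃ W : FDRep ℂ (G ⧸ repKer V), Simple W ∧ repKer W = ⊥ ∧ repDegree W = repDegree V := by
  let σ : Representation ℂ (G ⧸ repKer V) V := QuotientGroup.lift _ V.ρ (repKer_eq_ker V).le
  refine ⟨FDRep.of σ, simple_iff_isIrreducible.2
    ((isIrreducible_lift_iff (repKer_eq_ker V).le).2 (simple_iff_isIrreducible.1 hV)),
    injective_iff_repKer_eq_bot.1
    ((QuotientGroup.injective_lift_iff _ V.ρ (repKer_eq_ker V).le).2 (repKer_eq_ker V)), rfl⟩

theorem repDegree_eq_one_of_isMulCommutative [IsMulCommutative G] {V : FDRep ℂ G} (hV : Simple V) :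
    repDegree V = 1 :=
  have : IsIrreducible V.ρ := simple_iff_isIrreducible.1 hV
  IsIrreducible.finrank_eq_one_of_isMulCommutative V.ρ

theorem one_mem_cdSet : 1 ∈ cdSet G :=
  ⟨FDRep.of (1 : Representation ℂ G ℂ), simple_iff_isIrreducible.2
    (isIrreducible_of_finrank_eq_one (Module.finrank_self ℂ)), Module.finrank_self ℂ⟩

theorem cdSet_eq_singleton [IsMulCommutative G] : cdSet G = {1} := by
  refine Set.Subset.antisymm ?_ (Set.singleton_subset_iff.2 one_mem_cdSet)
  rintro _ ⟨V, hV, rfl⟩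
  exact repDegree_eq_one_of_isMulCommutative hV

section Finite

variable [Finite G]

theorem exists_simple_notMem_repKer {g : G} (hg : g ≠ 1) :
    ∃ V : FDRep ℂ G, Simple V ∧ g ∉ repKer V := by
  have : NeZero (Nat.card G : ℂ) := ⟨Nat.cast_ne_zero.2 Nat.card_pos.ne'⟩
  obtain ⟨V, hV, hVg⟩ := exists_simple_apply_ne_one (k := ℂ) hg
  exact ⟨V, hV, by rwa [repKer_eq_ker, MonoidHom.mem_ker]⟩

theorem isCyclic_of_repDegree_eq_one {V : FDRep ℂ G} (hker : repKer V = ⊥)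
    (hd : repDegree V = 1) : IsCyclic G :=
  isCyclic_of_finrank_eq_one (injective_iff_repKer_eq_bot.2 hker) hd

theorem isCyclic_quotient_repKer {V : FDRep ℂ G} (hV : Simple V) (hd : repDegree V = 1) :
    IsCyclic (G ⧸ repKer V) := by
  obtain ⟨W, -, hker, hWd⟩ := exists_simple_quotient_repKer hV
  exact isCyclic_of_repDegree_eq_one hker (hWd.trans hd)

theorem exists_repDegree_ne_one (hG : ¬IsMulCommutative G) :
    ∃ V : FDRep ℂ G, Simple V ∧ repDegree V ≠ 1 := by
  obtain ⟨g, hg, hg1⟩ := (Subgroup.bot_or_exists_ne_one (commutator G)).resolve_left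
    (mt (commutator_eq_bot_iff G).1 hG)
  obtain ⟨V, hV, hgV⟩ := exists_simple_notMem_repKer hg1
  refine ⟨V, hV, fun hd => hgV ?_⟩
  have := isCyclic_quotient_repKer hV hd
  exact Subgroup.Normal.quotient_commutative_iff_commutator_le.1 inferInstance hg

omit [Finite G] in
theorem cdSet_subset_of_index_prime {A : Subgroup G} [A.Normal] [IsMulCommutative A]
    (hA : A.index.Prime) : cdSet G ⊆ {1, A.index} := by
  rintro _ ⟨V, hV, rfl⟩
  exact finrank_eq_one_or_eq_index (simple_iff_isIrreducible.1 hV) hA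

theorem cdSet_eq_pair {A : Subgroup G} [A.Normal] [IsMulCommutative A] (hA : A.index.Prime)
    (hG : ¬IsMulCommutative G) : cdSet G = {1, A.index} := by
  refine (cdSet_subset_of_index_prime hA).antisymm (Set.pair_subset one_mem_cdSet ?_)
  obtain ⟨V, hV, hd⟩ := exists_repDegree_ne_one hG
  exact ⟨V, hV, (cdSet_subset_of_index_prime hA ⟨V, hV, rfl⟩).resolve_left hd⟩

theorem exists_simple_repKer_eq_bot [Fact p.Prime] (hG : IsPGroup p G)
    (hZ : IsCyclic (Subgroup.center G)) : ∃ V : FDRep ℂ G, Simple V ∧ repKer V = ⊥ := by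
  rcases subsingleton_or_nontrivial G with _ | _
  · obtain ⟨V, hV, -⟩ := one_mem_cdSet (G := G)
    exact ⟨V, hV, Subsingleton.elim _ _⟩
  obtain ⟨N, hN⟩ := exists_isMonolith hG hZ
  obtain ⟨g, hg, hg1⟩ := (Subgroup.bot_or_exists_ne_one N).resolve_left fun hbot =>
    (Fact.out : p.Prime).ne_one (by rw [← hN.card_eq, hbot, Subgroup.card_bot])
  obtain ⟨V, hV, hgV⟩ := exists_simple_notMem_repKer hg1
  exact ⟨V, hV, by_contra fun hker => hgV (hN.le_of_ne_bot _ hker hg)⟩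

theorem card_mem_codSet_of_isCyclic [Fact p.Prime] (hG : IsPGroup p G) [IsCyclic G] :
    Nat.card G ∈ codSet G := by
  obtain ⟨V, hV, hker⟩ := exists_simple_repKer_eq_bot hG inferInstance
  refine ⟨V, hV, ?_⟩
  rw [codegree, hker, Subgroup.index_bot, repDegree_eq_one_of_isMulCommutative hV, Nat.div_one]

theorem IsCodegreeWitness.pow_mem_codSet [Fact p.Prime] (hd : cdSet G ⊆ {1, p})
    {i : ℕ} (h : IsCodegreeWitness p i G) : p ^ i ∈ codSet G := by
  obtain ⟨hcard, hcyc⟩ | ⟨hcard, hG, hZ⟩ := h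
  · exact hcard ▸ card_mem_codSet_of_isCyclic (IsPGroup.of_card hcard)
  obtain ⟨V, hV, hker⟩ := exists_simple_repKer_eq_bot (IsPGroup.of_card hcard) hZ
  have hdeg : repDegree V = p := (hd ⟨V, hV, rfl⟩).resolve_left fun h1 =>
    have := isCyclic_of_repDegree_eq_one hker h1
    hG inferInstance
  refine ⟨V, hV, ?_⟩
  rw [codegree, hker, Subgroup.index_bot, hcard, hdeg, pow_succ,
    Nat.mul_div_cancel _ (Fact.out : p.Prime).pos]

theorem exists_isCodegreeWitness [Fact p.Prime] (hG : IsPGroup p G) (hd : cdSet G ⊆ {1, p})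
    {V : FDRep ℂ G} (hV : Simple V) :
    ∃ i, codegree V = p ^ i ∧ IsCodegreeWitness p i (G ⧸ repKer V) := by
  obtain ⟨n, hn⟩ := hG.index (repKer V)
  have hcard : Nat.card (G ⧸ repKer V) = p ^ n := hn
  obtain h1 | hdp := hd ⟨V, hV, rfl⟩
  · exact ⟨n, by rw [codegree, hn, h1, Nat.div_one], .inl ⟨hcard, isCyclic_quotient_repKer hV h1⟩⟩
  obtain ⟨W, hW, hker, hWd⟩ := exists_simple_quotient_repKer hV
  have hcomm : ¬IsMulCommutative (G ⧸ repKer V) := fun _ => (Fact.out : p.Prime).ne_one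
    (hdp.symm.trans (hWd.symm.trans (repDegree_eq_one_of_isMulCommutative hW)))
  obtain ⟨k, -, hkn, -⟩ := exists_card_center_eq_pow hcard hcomm
  obtain ⟨i, rfl⟩ := Nat.exists_eq_add_of_lt (by omega : 0 < n)
  rw [Nat.zero_add] at *
  refine ⟨i, ?_, .inr ⟨hcard, hcomm, isCyclic_center_of_injective
    (simple_iff_isIrreducible.1 hW) (injective_iff_repKer_eq_bot.2 hker)⟩⟩
  rw [codegree, hn, hdp, pow_succ, Nat.mul_div_cancel _ (Fact.out : p.Prime).pos]

end Finite

theorem mem_codSet_iff [Finite G] [Fact p.Prime] (hG : IsPGroup p G) (hd : cdSet G ⊆ {1, p})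
    {m : ℕ} : m ∈ codSet G ↔ ∃ i, m = p ^ i ∧ HasCodegreeWitness p i G := by
  constructor
  · rintro ⟨V, hV, rfl⟩
    obtain ⟨i, hi, h⟩ := exists_isCodegreeWitness hG hd hV
    exact ⟨i, hi, G ⧸ repKer V, _, _, QuotientGroup.mk'_surjective _, h⟩
  · rintro ⟨i, rfl, H, _, f, hf, h⟩
    have := Finite.of_surjective f hf
    exact codSet_subset_of_surjective hf
      (h.pow_mem_codSet ((cdSet_subset_of_surjective hf).trans hd))

theorem HasCodegreeWitness.le_of_not_isCyclic [Fact p.Prime] {i : ℕ}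
    (h : HasCodegreeWitness p i G) (hcard : Nat.card G = p ^ (n + 1)) (hG : ¬IsCyclic G) :
    i ≤ n := by
  have hp : p.Prime := Fact.out
  have := Nat.finite_of_card_ne_zero (hcard ▸ pow_ne_zero _ hp.ne_zero)
  obtain ⟨H, _, f, hf, hw⟩ := h
  have hle := Nat.card_le_card_of_surjective f hf
  by_contra! hin
  obtain ⟨hH, hcyc⟩ | ⟨hH, -⟩ := hw
  · have hGH : Nat.card G ≤ Nat.card H := hcard ▸ hH ▸ Nat.pow_le_pow_right hp.pos hin
    have hbij := hf.bijective_of_nat_card_le hGH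
    exact hG (isCyclic_of_injective f hbij.injective)
  · rw [hH, hcard, Nat.pow_le_pow_iff_right hp.one_lt] at hle
    omega

theorem codSet_eq_iff [Fact p.Prime] (hcard : Nat.card G = p ^ (n + 1)) (hG : ¬IsCyclic G)
    (hd : cdSet G ⊆ {1, p}) :
    codSet G = {m | ∃ i ≤ n, m = p ^ i} ↔ ∀ i ≤ n, HasCodegreeWitness p i G := by
  have := Nat.finite_of_card_ne_zero (hcard ▸ pow_ne_zero _ (Fact.out : p.Prime).ne_zero)
  have hiff {m} := mem_codSet_iff (m := m) (IsPGroup.of_card hcard) hd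
  refine ⟨fun h i hi => ?_, fun h => Set.ext fun m => ?_⟩
  · obtain ⟨j, hj, hw⟩ := hiff.1 (h.symm.subset ⟨i, hi, rfl⟩)
    rwa [Nat.pow_right_injective (Fact.out : p.Prime).two_le hj]
  · exact hiff.trans ⟨fun ⟨i, hm, hw⟩ => ⟨i, hw.le_of_not_isCyclic hcard hG, hm⟩,
      fun ⟨i, hi, hm⟩ => ⟨i, hm, h i hi⟩⟩

end Character

/-! ### The groups of the theorem -/

section Abelian

theorem codSet_congr {G H : Type} [Group G] [Group H] (e : G ≃* H) : codSet G = codSet H :=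
  (codSet_subset_of_surjective (f := e.symm.toMonoidHom) e.symm.surjective).antisymm
    (codSet_subset_of_surjective (f := e.toMonoidHom) e.surjective)

theorem castHom_toMultiplicative_surjective {a b : ℕ} (h : a ∣ b) :
    Function.Surjective (ZMod.castHom h (ZMod a)).toAddMonoidHom.toMultiplicative :=
  ZMod.castHom_surjective h

theorem hasCodegreeWitness_zmod {p n i : ℕ} (hi : i ≤ n) :
    HasCodegreeWitness p i (Multiplicative (ZMod (p ^ n))) :=
  ⟨Multiplicative (ZMod (p ^ i)), inferInstance, _,
    castHom_toMultiplicative_surjective (pow_dvd_pow p hi),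
    .inl ⟨Nat.card_zmod _, inferInstance⟩⟩

theorem codSet_zmod_prod_zmod {p n : ℕ} [Fact p.Prime] :
    codSet (Multiplicative (ZMod (p ^ (n + 1))) × Multiplicative (ZMod p)) =
      {m | ∃ i ≤ n + 1, m = p ^ i} := by
  have hp : p.Prime := Fact.out
  have hM : Nat.card (Multiplicative (ZMod (p ^ (n + 1)))) = p ^ (n + 1) := Nat.card_zmod _
  have hN : Nat.card (Multiplicative (ZMod p)) = p := Nat.card_zmod _
  refine (codSet_eq_iff ?_ ?_ ?_).2 fun i hi =>
    (hasCodegreeWitness_zmod hi).of_surjective (f := MonoidHom.fst _ _) Prod.fst_surjective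
  · rw [Nat.card_prod, hM, hN, ← pow_succ]
  · rw [Group.isCyclic_prod_iff, hM, hN, Nat.coprime_pow_left_iff n.succ_pos, Nat.coprime_self]
    exact fun h => hp.ne_one h.2.2
  · rw [cdSet_eq_singleton]
    exact Set.singleton_subset_iff.2 (Set.mem_insert _ _)

end Abelian

section SemidirectProduct

open SemidirectProduct

section

variable {N K : Type*} [Group N] [Group K] {φ : K →* MulAut N}

theorem not_isMulCommutative_semidirectProduct {g : K} {x : N} (h : φ g x ≠ x) :
    ¬IsMulCommutative (N ⋊[φ] K) := fun _ =>
  h (inl_injective (φ := φ) (by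
    rw [inl_aut, mul_comm' (inr g), mul_assoc, ← map_mul, mul_inv_cancel, map_one, mul_one]))

theorem index_range_inl : (inl : N →* N ⋊[φ] K).range.index = Nat.card K := by
  rw [range_inl_eq_ker_rightHom, Subgroup.index_ker,
    MonoidHom.range_eq_top.2 rightHom_surjective, Subgroup.card_top]

theorem exists_surjective_semidirectProduct {M : Type*} [Group M] {f : N →* M}
    (hf : Function.Surjective f) (h : ∀ g x, f (φ g x) = f x) :
    ∃ F : N ⋊[φ] K →* M, Function.Surjective F :=
  ⟨lift f 1 fun g => MonoidHom.ext fun x => by simpa using h g x,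
    fun y => (hf y).imp' inl fun _ hx => (lift_inl _ _ _ _).trans hx⟩

end

variable {p m : ℕ} [Fact p.Prime]
  {φ : Multiplicative (ZMod p) →* MulAut (Multiplicative (ZMod (p ^ (m + 1))))}

theorem hasCodegreeWitness_semidirectProduct {i : ℕ} (hi : i ≤ m)
    (hφ : ∀ x, φ (Multiplicative.ofAdd (1 : ZMod p)) x = x ^ (1 + p ^ m)) :
    HasCodegreeWitness p i
      (Multiplicative (ZMod (p ^ (m + 1))) ⋊[φ] Multiplicative (ZMod p)) := by
  have hdvd : p ^ m ∣ p ^ (m + 1) := pow_dvd_pow p m.le_succ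
  let f := (ZMod.castHom hdvd (ZMod (p ^ m))).toAddMonoidHom.toMultiplicative
  have hpow (y : Multiplicative (ZMod (p ^ m))) : y ^ p ^ m = 1 :=
    orderOf_dvd_iff_pow_eq_one.1 ((orderOf_dvd_natCard y).trans (Nat.card_zmod _).dvd)
  have hf (x) : f (φ (Multiplicative.ofAdd (1 : ZMod p)) x) = f x := by
    rw [hφ, map_pow, pow_add, pow_one, hpow, mul_one]
  have hfi (i : ℕ) (x) : f (φ (Multiplicative.ofAdd (1 : ZMod p) ^ i) x) = f x := by
    induction i generalizing x with
    | zero => rw [pow_zero, map_one, MulAut.one_apply]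
    | succ i ih => rw [pow_succ (Multiplicative.ofAdd (1 : ZMod p)), map_mul, MulAut.mul_apply,
        ih, hf]
  obtain ⟨F, hF⟩ := exists_surjective_semidirectProduct (φ := φ) (f := f)
    (castHom_toMultiplicative_surjective hdvd) fun g x => by
      obtain ⟨i, rfl⟩ := exists_eq_ofAdd_one_pow g
      exact hfi i x
  exact (hasCodegreeWitness_zmod hi).of_surjective hF

theorem codSet_semidirectProduct
    (hφ : ∀ x, φ (Multiplicative.ofAdd (1 : ZMod p)) x = x ^ (1 + p ^ m)) :
    codSet (Multiplicative (ZMod (p ^ (m + 1))) ⋊[φ] Multiplicative (ZMod p)) =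
      {k | ∃ i ≤ m + 1, k = p ^ i} := by
  have hp : p.Prime := Fact.out
  let S := Multiplicative (ZMod (p ^ (m + 1))) ⋊[φ] Multiplicative (ZMod p)
  have hcard : Nat.card S = p ^ (m + 2) :=
    SemidirectProduct.card.trans
      ((congrArg₂ _ (Nat.card_zmod _) (Nat.card_zmod _)).trans (pow_succ p (m + 1)).symm)
  have hS : ¬IsMulCommutative S := by
    refine not_isMulCommutative_semidirectProduct (g := Multiplicative.ofAdd (1 : ZMod p))
      (x := Multiplicative.ofAdd (1 : ZMod (p ^ (m + 1)))) fun h => ?_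
    rw [hφ, pow_add _ 1, pow_one, mul_eq_left, ← ofAdd_nsmul, nsmul_one, ofAdd_eq_one,
      ZMod.natCast_eq_zero_iff, Nat.pow_dvd_pow_iff_le_right hp.one_lt] at h
    exact m.not_succ_le_self h
  let A : Subgroup S := (inl : _ →* S).range
  have : A.Normal := by
    rw [show A = _ from range_inl_eq_ker_rightHom]
    exact MonoidHom.normal_ker _
  have : IsCyclic A := isCyclic_of_surjective _ (MonoidHom.rangeRestrict_surjective _)
  have hA : A.index = p := index_range_inl.trans (Nat.card_zmod p)
  have hA' : A.index.Prime := by rwa [hA]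
  have hZ : Subgroup.center S ≤ A := center_le_of_index_prime hA' hS
  have hZc : IsCyclic (Subgroup.center S) :=
    isCyclic_of_injective (Subgroup.inclusion hZ) (Subgroup.inclusion_injective hZ)
  refine (codSet_eq_iff hcard (fun _ => hS inferInstance)
    ((cdSet_subset_of_index_prime hA').trans (by rw [hA]))).2 fun i hi => ?_
  obtain hi | rfl := hi.lt_or_eq
  · exact hasCodegreeWitness_semidirectProduct (Nat.le_of_lt_succ hi) hφ
  · exact ⟨S, _, MonoidHom.id S, Function.surjective_id, .inr ⟨hcard, hS, hZc⟩⟩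

end SemidirectProduct

section MaximalClass

theorem nilClass_eq {G : Type} [Group G] [Group.IsNilpotent G] :
    nilClass G = Group.nilpotencyClass G := by
  have h : {n | Subgroup.upperCentralSeries G n = ⊤} = Set.Ici (Group.nilpotencyClass G) :=
    Set.ext fun _ => Subgroup.upperCentralSeries_eq_top_iff_nilpotencyClass_le
  exact (congrArg sInf h).trans csInf_Ici

variable {p n i j : ℕ} [Fact p.Prime] {G : Type u} [Group G]

omit [Fact p.Prime] in
theorem hasCodegreeWitness_zero : HasCodegreeWitness p 0 G :=
  ⟨PUnit, inferInstance, 1, fun _ => ⟨1, rfl⟩, .inl ⟨Nat.card_unique, isCyclic_of_subsingleton⟩⟩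

variable [Finite G]

theorem hasCodegreeWitness_one (hcard : Nat.card G = p ^ (n + 1)) : HasCodegreeWitness p 1 G := by
  obtain ⟨A, hA⟩ := Sylow.exists_subgroup_card_pow_prime (G := G) p (n := n)
    (hcard ▸ pow_dvd_pow p n.le_succ)
  have hidx : A.index = p := index_eq_prime_of_card hcard hA
  have := normal_of_index_eq_prime (IsPGroup.of_card hcard) hidx
  exact ⟨G ⧸ A, _, _, QuotientGroup.mk'_surjective A,
    .inl ⟨hidx.trans (pow_one p).symm, isCyclic_of_prime_card hidx⟩⟩

theorem nilpotencyClass_le_of_card (hcard : Nat.card G = p ^ (n + 2)) :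
    Group.nilpotencyClass G ≤ n + 1 := by
  induction n using Nat.strong_induction_on generalizing G with
  | _ n ih =>
    have := (IsPGroup.of_card hcard).isNilpotent
    by_cases hG : IsMulCommutative G
    · exact (Group.IsNilpotent.nilpotencyClass_le_one_iff.2 hG).trans n.succ_pos
    have := nontrivial_of_not_isMulCommutative hG
    obtain ⟨k, hk0, hk, hZ⟩ := exists_card_center_eq_pow hcard hG
    obtain ⟨j, rfl⟩ := Nat.exists_eq_add_of_le (Nat.le_of_add_le_add_right hk)
    have hle := ih j (by omega) (index_eq_pow_of_card (i := k) hcard hZ)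
    rw [Group.nilpotencyClass_eq_quotient_center_plus_one]
    omega

theorem not_isMulCommutative_of_one_lt_nilpotencyClass {G : Type*} [Group G]
    [Group.IsNilpotent G] (h : 1 < Group.nilpotencyClass G) : ¬IsMulCommutative G :=
  fun hG => h.not_ge (Group.IsNilpotent.nilpotencyClass_le_one_iff.2 hG)

theorem card_center_eq_prime_of_maximalClass (hcard : Nat.card G = p ^ (n + 3))
    (hcl : Group.nilpotencyClass G = n + 2) : Nat.card (Subgroup.center G) = p := by
  have := (IsPGroup.of_card hcard).isNilpotent
  have hG : ¬IsMulCommutative G := not_isMulCommutative_of_one_lt_nilpotencyClass (by omega)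
  have := nontrivial_of_not_isMulCommutative hG
  obtain ⟨k, hk0, hk, hZ⟩ := exists_card_center_eq_pow hcard hG
  obtain ⟨j, hj⟩ := Nat.exists_eq_add_of_le hk
  have hle := nilpotencyClass_le_of_card (n := j)
    (index_eq_pow_of_card (i := k) (by rw [hcard, hj, add_assoc, add_comm 2]) hZ)
  rw [Group.nilpotencyClass_eq_quotient_center_plus_one] at hcl
  obtain rfl : k = 1 := by omega
  rw [hZ, pow_one]

theorem exists_surjective_of_maximalClass (hcard : Nat.card G = p ^ (n + 3))
    (hcl : Group.nilpotencyClass G = n + 2) (hj : j ≤ n) :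
    ∃ (H : Type u) (_ : Group H) (f : G →* H), Function.Surjective f ∧
      Nat.card H = p ^ (j + 3) ∧ ¬IsMulCommutative H ∧ IsCyclic (Subgroup.center H) := by
  have := (IsPGroup.of_card hcard).isNilpotent
  have hG : ¬IsMulCommutative G := not_isMulCommutative_of_one_lt_nilpotencyClass (by omega)
  have hZ := card_center_eq_prime_of_maximalClass hcard hcl
  induction n, hj using Nat.le_induction generalizing G with
  | base =>
    exact ⟨G, _, MonoidHom.id G, Function.surjective_id, hcard, hG, isCyclic_of_prime_card hZ⟩
  | succ n _ ih =>
    have := nontrivial_of_not_isMulCommutative hG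
    have hQ : Nat.card (G ⧸ Subgroup.center G) = p ^ (n + 3) :=
      index_eq_pow_of_card (i := 1) (by rw [hcard, add_comm 1]) (by rw [hZ, pow_one])
    rw [Group.nilpotencyClass_eq_quotient_center_plus_one] at hcl
    have hclQ := Nat.succ.inj hcl
    have := (IsPGroup.of_card hQ).isNilpotent
    obtain ⟨H, _, f, hf, h⟩ := ih hQ hclQ this
      (not_isMulCommutative_of_one_lt_nilpotencyClass (by omega))
      (card_center_eq_prime_of_maximalClass hQ hclQ)
    exact ⟨H, _, f.comp (QuotientGroup.mk' _), hf.comp (QuotientGroup.mk'_surjective _), h⟩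

theorem hasCodegreeWitness_of_maximalClass (hcard : Nat.card G = p ^ (n + 3))
    (hcl : Group.nilpotencyClass G = n + 2) (hi : i ≤ n + 2) : HasCodegreeWitness p i G := by
  obtain _ | _ | i := i
  · exact hasCodegreeWitness_zero
  · exact hasCodegreeWitness_one hcard
  · obtain ⟨H, _, f, hf, hH⟩ := exists_surjective_of_maximalClass hcard hcl
      (by omega : i ≤ n)
    exact ⟨H, _, f, hf, .inr hH⟩

theorem cdSet_eq_pair_of_card_eq_prime_pow_three {G : Type} [Group G]
    (hcard : Nat.card G = p ^ 3) (hG : ¬IsMulCommutative G) : cdSet G = {1, p} := by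
  have hp : p.Prime := Fact.out
  have := Nat.finite_of_card_ne_zero (hcard ▸ pow_ne_zero _ hp.ne_zero)
  obtain ⟨A, hA⟩ := Sylow.exists_subgroup_card_pow_prime (G := G) p (n := 2)
    (hcard ▸ pow_dvd_pow p (Nat.le_succ 2))
  have hidx : A.index = p := index_eq_prime_of_card hcard hA
  have := normal_of_index_eq_prime (IsPGroup.of_card hcard) hidx
  have := IsPGroup.isMulCommutative_of_card_eq_prime_sq hA
  rw [cdSet_eq_pair (hidx ▸ hp) hG, hidx]

theorem cdSet_eq_pair_of_maximalClass {G : Type} [Group G] (hcard : Nat.card G = p ^ (n + 3))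
    (hcl : Group.nilpotencyClass G = n + 2) (hcd : (cdSet G).ncard = 2) : cdSet G = {1, p} := by
  have hp : p.Prime := Fact.out
  have := Nat.finite_of_card_ne_zero (hcard ▸ pow_ne_zero _ hp.ne_zero)
  obtain ⟨H, _, f, hf, hH, hHc, -⟩ := exists_surjective_of_maximalClass hcard hcl n.zero_le
  have hsub : {1, p} ⊆ cdSet G :=
    cdSet_eq_pair_of_card_eq_prime_pow_three hH hHc ▸ cdSet_subset_of_surjective hf
  exact (Set.eq_of_subset_of_ncard_le hsub (by rw [hcd, Set.ncard_pair hp.one_lt.ne])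
    (Set.finite_of_ncard_ne_zero (by omega))).symm

theorem codSet_eq_of_maximalClass {G : Type} [Group G] (hcard : Nat.card G = p ^ (n + 2))
    (hcl : nilClass G = n + 1) (hcd : (cdSet G).ncard = 2) :
    codSet G = {m | ∃ i ≤ n + 1, m = p ^ i} := by
  have hp : p.Prime := Fact.out
  have := Nat.finite_of_card_ne_zero (hcard ▸ pow_ne_zero _ hp.ne_zero)
  have := (IsPGroup.of_card hcard).isNilpotent
  have hG : ¬IsMulCommutative G := fun _ => by
    rw [cdSet_eq_singleton, Set.ncard_singleton] at hcd
    omega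
  rw [nilClass_eq] at hcl
  obtain _ | n := n
  · exact absurd (Group.IsNilpotent.nilpotencyClass_le_one_iff.1 hcl.le) hG
  exact (codSet_eq_iff hcard (fun _ => hG inferInstance)
    (cdSet_eq_pair_of_maximalClass hcard hcl hcd).subset).2 fun i hi =>
      hasCodegreeWitness_of_maximalClass hcard hcl hi

end MaximalClass

section Codegrees

variable {p n : ℕ} {G : Type} [Group G]

theorem eq_of_mul_div_eq_self {a b d : ℕ} (hb : 0 < b) (hba : b ≤ a) (h : a * b / d = a) :
    d = b := by
  have hd : 0 < d := Nat.pos_of_ne_zero (by rintro rfl; rw [Nat.div_zero] at h; omega)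
  rw [Nat.div_eq_iff hd] at h
  obtain ⟨h1, h2⟩ := h
  have hdb : d ≤ b := Nat.le_of_mul_le_mul_left (c := a) (by omega) (hb.trans_le hba)
  by_contra hne
  have := Nat.mul_le_mul_left a (by omega : d + 1 ≤ b)
  rw [mul_add] at this
  omega

theorem repKer_of_codegree_eq [Fact p.Prime] (hcard : Nat.card G = p ^ (n + 2))
    {V : FDRep ℂ G} (h : codegree V = p ^ (n + 1)) :
    ((repKer V).index = p ^ (n + 1) ∧ repDegree V = 1) ∨ (repKer V = ⊥ ∧ repDegree V = p) := by
  have hp : p.Prime := Fact.out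
  have := Nat.finite_of_card_ne_zero (hcard ▸ pow_ne_zero _ hp.ne_zero)
  obtain ⟨k, hk, hidx⟩ := (Nat.dvd_prime_pow hp).1 (hcard ▸ (repKer V).index_dvd_card)
  have hnk : n + 1 ≤ k := by
    rw [← Nat.pow_le_pow_iff_right hp.one_lt, ← hidx, ← h]
    exact Nat.div_le_self _ _
  rw [codegree, hidx] at h
  obtain rfl | rfl : k = n + 1 ∨ k = n + 2 := by omega
  · exact .inl ⟨hidx, (Nat.div_eq_self.1 h).resolve_left (pow_ne_zero _ hp.ne_zero)⟩
  · refine .inr ⟨?_, eq_of_mul_div_eq_self hp.pos (Nat.le_self_pow n.succ_ne_zero p) h⟩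
    have hmul := (repKer V).card_mul_index
    rw [hidx, hcard] at hmul
    exact Subgroup.card_eq_one.1 (Nat.eq_of_mul_eq_mul_right (pow_pos hp.pos _)
      (hmul.trans (one_mul _).symm))

theorem not_isCyclic_of_codSet_eq [Fact p.Prime] (hcard : Nat.card G = p ^ (n + 1))
    (h : codSet G = {m | ∃ i ≤ n, m = p ^ i}) : ¬IsCyclic G := fun _ => by
  have hp : p.Prime := Fact.out
  have := Nat.finite_of_card_ne_zero (hcard ▸ pow_ne_zero _ hp.ne_zero)
  obtain ⟨i, hi, hc⟩ := h.subset (card_mem_codSet_of_isCyclic (IsPGroup.of_card hcard))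
  have := Nat.pow_right_injective hp.two_le (hcard.symm.trans hc)
  omega

theorem maximalClass_or_isModularType_of_codSet_eq [Fact p.Prime]
    (hcard : Nat.card G = p ^ (n + 1)) (hcod : codSet G = {m | ∃ i ≤ n, m = p ^ i})
    {V : FDRep ℂ G} (hV : Simple V) (hker : repKer V = ⊥) (hd : repDegree V = p) :
    (nilClass G = n ∧ (cdSet G).ncard = 2) ∨ (3 ≤ n ∧ IsModularType p G) := by
  have hp : p.Prime := Fact.out
  have := Nat.finite_of_card_ne_zero (hcard ▸ pow_ne_zero _ hp.ne_zero)
  have hGp := IsPGroup.of_card hcard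
  have := hGp.isNilpotent
  have hG : ¬IsMulCommutative G := fun _ =>
    hp.ne_one (hd.symm.trans (repDegree_eq_one_of_isMulCommutative hV))
  obtain ⟨A, _, _, hA⟩ := exists_normal_isMulCommutative_index_eq hGp
    (simple_iff_isIrreducible.1 hV) (injective_iff_repKer_eq_bot.2 hker) hd
  have hcd : cdSet G = {1, p} := hA ▸ cdSet_eq_pair (hA ▸ hp) hG
  have hw := (codSet_eq_iff hcard (fun _ => hG inferInstance) hcd.subset).1 hcod
  obtain ⟨hcl, -⟩ | ⟨hn, hmod⟩ :=
    maximalClass_or_isModularType hA hcard hG fun i hi => hw i (Nat.le_of_lt_succ hi)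
  · exact .inl ⟨nilClass_eq.trans (Nat.succ.inj hcl), by rw [hcd, Set.ncard_pair hp.one_lt.ne]⟩
  · exact .inr ⟨Nat.le_of_succ_le_succ hn, hmod⟩

end Codegrees

/-- Theorem A: for a `p`-group of order `p^n ≥ p^2`, `cod(G) = {p^i | 0 ≤ i ≤ n-1}` iff
`G ≅ ℤ_{p^{n-1}} × ℤ_p`, or `n ≥ 4`, `G` has class 2 and `G ≅ ℤ_{p^{n-1}} ⋊ ℤ_p` with the
generator of `ℤ_p` acting by `x ↦ x^{1+p^{n-2}}`, or `G` has maximal class and `|cd(G)| = 2`. -/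
theorem full_codegrees_iff (p n : ℕ) (hp : p.Prime) (G : Type) [Group G] [Fintype G]
    (hcard : Fintype.card G = p ^ n) (hn : 2 ≤ n) :
    codSet G = {m | ∃ i ≤ n - 1, m = p ^ i} ↔
      (Nonempty (G ≃* Multiplicative (ZMod (p ^ (n - 1))) × Multiplicative (ZMod p)) ∨
        (4 ≤ n ∧ nilClass G = 2 ∧
          ∃ φ : Multiplicative (ZMod p) →* MulAut (Multiplicative (ZMod (p ^ (n - 1)))),
            (∀ x, φ (Multiplicative.ofAdd (1 : ZMod p)) x = x ^ (1 + p ^ (n - 2))) ∧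
            Nonempty (G ≃* Multiplicative (ZMod (p ^ (n - 1))) ⋊[φ] Multiplicative (ZMod p))) ∨
        (nilClass G = n - 1 ∧ (cdSet G).ncard = 2)) := by
  have := Fact.mk hp
  obtain ⟨m, rfl⟩ := Nat.exists_eq_add_of_le' hn
  rw [← Nat.card_eq_fintype_card] at hcard
  refine ⟨fun hcod => ?_, ?_⟩
  · obtain ⟨V, hV, hVcod⟩ := hcod.symm.subset ⟨m + 1, le_rfl, rfl⟩
    obtain ⟨hidx, hd⟩ | ⟨hker, hd⟩ := repKer_of_codegree_eq hcard hVcod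
    · exact .inl (nonempty_mulEquiv_prod_of_isCyclic_quotient hcard hidx
        (isCyclic_quotient_repKer hV hd) (not_isCyclic_of_codSet_eq hcard hcod))
    obtain hmax | ⟨hm, hmod⟩ := maximalClass_or_isModularType_of_codSet_eq hcard hcod hV hker hd
    · exact .inr (.inr hmax)
    obtain ⟨k, rfl⟩ := Nat.exists_eq_add_of_le' (Nat.le_of_succ_le_succ hm)
    have hGp := IsPGroup.of_card hcard
    have := hGp.isNilpotent
    exact .inr (.inl ⟨by omega, nilClass_eq.trans (hmod.nilpotencyClass_eq_two hGp),
      hmod.nonempty_mulEquiv hcard⟩)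
  · rintro (⟨⟨e⟩⟩ | ⟨-, -, φ, hφ, ⟨e⟩⟩ | ⟨hcl, hcd⟩)
    · exact (codSet_congr e).trans codSet_zmod_prod_zmod
    · exact (codSet_congr e).trans (codSet_semidirectProduct hφ)
    · exact codSet_eq_of_maximalClass hcard hcl hcd
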